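/- Fix an integer δ > 2. Let G be a 2-connected finite simple graph satisfying (♠)_δ in which the weight of every edge equals δ−1, and suppose G is not a cycle of length δ. Then for every (δ−1)-ear P of G, the graph obtained from G by contracting all edges of P is not 2-connected. -/

import Mathlib

/-!
Call `f(W) = δ(|W| - 1) - (δ - 1)|E(W)|` the excess of a vertex set `W`. It is submodular, and
modular on pairs without crossing edges. Since all weights are `δ - 1`, the condition `(♠)_δ` says
`f(V) = 0` and `f(T) = 1` for every good flat `T`. Splitting at separating vertices and enlarging
sets with disconnected complement shows that `f(W) ≥ 1` for every connected proper set `W` with at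
least two vertices (`Tight.one_le`). Consequently, such a set of excess one has no separating
vertex (`Tight.conn_diff`).

Suppose the contraction of a `(δ-1)`-ear with vertex set `P` and ends `a`, `b` is `2`-connected.
Then `V \ P` is connected, and `f(P) ≥ 1` forces `P` to carry only the edges of the path; thus
`f(P) = δ - 1` and `f({a, b}) = δ` (`IsEar.earSet`). So the outer graph `H`, obtained by deleting
the inner vertices of the ear, has excess one and no separating vertex.

Consider connected sets `U ⊆ V \ P` such that `a` and `b` are linked in `H \ U`. If `U` is maximal
with this property, then `V \ U` is a good flat, so it has excess one (`Avoiding.excess_compl`).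
Take such a `U`, starting from a single vertex. Then `M = H \ U` has excess two, and a vertex
`c ∈ M \ {a, b}` adjacent to `U` separates `a` from `b` in `M`, by maximality; both sides together
with `c` have excess one and are therefore without separating vertices. It follows that `a` and `b`
are also linked through `U`, while `M \ {a, b}` is connected (`EarSet.false_of_split`). So a second
maximal set `U'` contains `M \ {a, b}`. The two good flats `V \ U` and `V \ U'` of excess one meet
exactly in `P`, and the edge from `c` to `U` crosses between them if they cover `V`. Submodularity
gives `2 ≥ 1 + (δ - 1)` if they do not cover `V` and `2 ≥ 0 + (δ - 1) + (δ - 1)` if they do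
(`EarSet.false_of_cover`). Both are impossible for `δ > 2`.
-/

open SimpleGraph
open scoped Pointwise

namespace Gor

/-! ### Graph-theoretic notions -/

/-- A graph is `2`-connected if it is connected and remains connected after deletion of any
single vertex.  A single edge `K₂` counts as `2`-connected. -/
def IsTwoConnected {V : Type*} (G : SimpleGraph V) : Prop :=
  G.Connected ∧ ∀ v : V, (G.induce {u : V | u ≠ v}).Connected

/-- `E(S)`: the set of edges of `G` with both endpoints in `S`. -/
def edgesIn {V : Type*} (G : SimpleGraph V) (S : Set V) : Set (Sym2 V) :=
  {e ∈ G.edgeSet | ∀ v ∈ e, v ∈ S}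

/-- The simple graph obtained from `G` by contracting all edges in `F`: its vertices are the
connected components of the graph with edge set `F`, two being adjacent if some edge of `G`
joins them. -/
def contractEdges {V : Type*} (G : SimpleGraph V) (F : Set (Sym2 V)) :
    SimpleGraph (SimpleGraph.fromEdgeSet F).ConnectedComponent :=
  SimpleGraph.fromRel fun c d => ∃ u v : V, G.Adj u v ∧
    (SimpleGraph.fromEdgeSet F).connectedComponentMk u = c ∧
    (SimpleGraph.fromEdgeSet F).connectedComponentMk v = d

/-- `S` is a good flat of `G`: the induced subgraph `G[S]` is `2`-connected and the contraction
of all edges of `E(S)` in `G` is `2`-connected. -/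
def IsGoodFlat {V : Type*} (G : SimpleGraph V) (S : Set V) : Prop :=
  IsTwoConnected (G.induce S) ∧ IsTwoConnected (contractEdges G (edgesIn G S))

/-- The weight function `w : E → {1, δ-1}` with `w e = 1` whenever `G∖e` is `2`-connected and
`w e = δ - 1` whenever `G/e` is `2`-connected. -/
def IsCanonicalWeight {V : Type*} (G : SimpleGraph V) (δ : ℕ) (w : Sym2 V → ℕ) : Prop :=
  (∀ e ∈ G.edgeSet, w e = 1 ∨ w e = δ - 1) ∧
  (∀ e ∈ G.edgeSet, IsTwoConnected (G.deleteEdges {e}) → w e = 1) ∧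
  (∀ e ∈ G.edgeSet, IsTwoConnected (contractEdges G {e}) → w e = δ - 1)

/-- A `2`-connected graph `G` satisfies `(♠)_δ` via the weight function `w`. -/
def SatisfiesSpade {V : Type*} (G : SimpleGraph V) (δ : ℕ) (w : Sym2 V → ℕ) : Prop :=
  IsTwoConnected G ∧ IsCanonicalWeight G δ w ∧
  (∑ᶠ e ∈ G.edgeSet, w e) = δ * (Nat.card V - 1) ∧
  ∀ S : Set V, IsGoodFlat G S → (∑ᶠ e ∈ edgesIn G S, w e) + 1 = δ * (S.ncard - 1)

/-- The number of `2`-connected components (blocks) of a graph: the number of inclusion-maximal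
vertex subsets inducing a `2`-connected subgraph. -/
noncomputable def numBlocks {V : Type*} (G : SimpleGraph V) : ℕ :=
  {S : Set V | IsTwoConnected (G.induce S) ∧
    ∀ T : Set V, S ⊆ T → IsTwoConnected (G.induce T) → S = T}.ncard

/-! ### Lattice polytopes and the Gorenstein property -/

/-- A point of `ℝ^η` is a lattice point if all its coordinates are integers. -/
def IsLatticePoint {η : Type*} (x : η → ℝ) : Prop := ∀ i, ∃ z : ℤ, x i = z

/-- The cone over a polytope `P ⊆ ℝ^η`, living in `ℝ^η × ℝ`. -/
def coneOver {η : Type*} (P : Set (η → ℝ)) : Set ((η → ℝ) × ℝ) :=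
  {y | ∃ t : ℝ, ∃ p ∈ P, 0 ≤ t ∧ y = (t • p, t)}

/-- The lattice affinely spanned by the lattice points of `P`, placed at height one;
i.e. the subgroup of `ℝ^η × ℝ` generated by `{(p, 1) : p a lattice point of P}`. -/
def coneLattice {η : Type*} (P : Set (η → ℝ)) : Submodule ℤ ((η → ℝ) × ℝ) :=
  Submodule.span ℤ {y | ∃ p ∈ P, IsLatticePoint p ∧ y = (p, 1)}

/-- `h` is a linear form cutting out a facet-supporting hyperplane of the cone over `P`:
it is nonnegative on the cone and vanishes on a subset of the cone spanning one dimension less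
than the cone itself. -/
def IsFacetForm {η : Type*} (P : Set (η → ℝ)) (h : ((η → ℝ) × ℝ) →ₗ[ℝ] ℝ) : Prop :=
  (∀ y ∈ coneOver P, 0 ≤ h y) ∧
  Module.finrank ℝ (Submodule.span ℝ {y ∈ coneOver P | h y = 0}) + 1 =
    Module.finrank ℝ (Submodule.span ℝ (coneOver P))

/-- `h` is reduced with respect to the lattice spanned by `P`: it takes integer values on the
lattice and attains the value `1` there. -/
def IsReducedForm {η : Type*} (P : Set (η → ℝ)) (h : ((η → ℝ) × ℝ) →ₗ[ℝ] ℝ) : Prop :=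
  (∀ y ∈ coneLattice P, ∃ z : ℤ, h y = z) ∧ ∃ y ∈ coneLattice P, h y = 1

/-- A polytope `P`, regarded as full-dimensional in the affine lattice it spans, is
`δ`-Gorenstein if there is a lattice point `v ∈ δP` with `h (v, δ) = 1` for the reduced
equation `h` of every facet-supporting hyperplane of the cone over `P`. -/
def IsDeltaGorenstein {η : Type*} (P : Set (η → ℝ)) (δ : ℕ) : Prop :=
  ∃ v : η → ℝ, v ∈ (δ : ℝ) • P ∧ (v, (δ : ℝ)) ∈ coneLattice P ∧
    ∀ h : ((η → ℝ) × ℝ) →ₗ[ℝ] ℝ, IsFacetForm P h → IsReducedForm P h → h (v, (δ : ℝ)) = 1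

/-- A polytope is Gorenstein if it is `δ`-Gorenstein for some positive integer `δ`. -/
def IsGorenstein {η : Type*} (P : Set (η → ℝ)) : Prop :=
  ∃ δ : ℕ, 0 < δ ∧ IsDeltaGorenstein P δ

/-! ### Graphic matroids of simple graphs and their polytopes -/

/-- An independent set of the graphic matroid of `G`: a set of edges forming a forest. -/
def IsGraphicIndep {V : Type*} (G : SimpleGraph V) (I : Set (Sym2 V)) : Prop :=
  I ⊆ G.edgeSet ∧ (SimpleGraph.fromEdgeSet I).IsAcyclic

/-- A basis of the graphic matroid of `G`: a maximal forest (spanning forest). -/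
def IsGraphicBasis {V : Type*} (G : SimpleGraph V) (B : Set (Sym2 V)) : Prop :=
  IsGraphicIndep G B ∧ ∀ e ∈ G.edgeSet, e ∉ B → ¬ IsGraphicIndep G (insert e B)

/-- The base polytope `B(M(G))` of the graphic matroid of `G`: the convex hull of the
indicator vectors of the bases. -/
def basePolytope {V : Type*} (G : SimpleGraph V) : Set (Sym2 V → ℝ) :=
  convexHull ℝ {x | ∃ B : Set (Sym2 V), IsGraphicBasis G B ∧
    x = B.indicator fun _ => (1 : ℝ)}

/-- The base polytope `B(M(G))`, regarded inside `ℝ^E` where `E` is the edge set of `G`. -/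
def basePolytopeE {V : Type*} (G : SimpleGraph V) : Set (↥G.edgeSet → ℝ) :=
  convexHull ℝ {x | ∃ B : Set (Sym2 V), IsGraphicBasis G B ∧
    x = (Subtype.val ⁻¹' B).indicator fun _ => (1 : ℝ)}

/-- A homogeneous inequality `g x ≥ 0` is valid for `P` and defines a facet (a supporting
hyperplane whose intersection with `P` has affine dimension one less than `P`). -/
def IsSupportingFaceIneq {α : Type*} (P : Set (α → ℝ)) (g : (α → ℝ) → ℝ) : Prop :=
  (∀ x ∈ P, 0 ≤ g x) ∧
  Module.finrank ℝ (vectorSpan ℝ {x ∈ P | g x = 0}) + 1 =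
    Module.finrank ℝ (vectorSpan ℝ P)

/-! ### Multigraphs -/

/-- A finite undirected loopless multigraph on a vertex type `V` with edge type `E`. -/
structure Multigraph (V E : Type*) where
  ends : E → Sym2 V
  loopless : ∀ e, ¬ (ends e).IsDiag

/-- The underlying simple graph of a multigraph. -/
def Multigraph.toSimple {V E : Type*} (G : Multigraph V E) : SimpleGraph V :=
  SimpleGraph.fromEdgeSet (Set.range G.ends)

/-- `E(S)` for a multigraph: the set of edges with both endpoints in `S`. -/
def Multigraph.edgesIn {V E : Type*} (G : Multigraph V E) (S : Set V) : Set E :=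
  {e | ∀ v ∈ G.ends e, v ∈ S}

/-- A set of edges of a multigraph is a forest (an independent set of the graphic matroid):
no two parallel edges and no cycle. -/
def IsMultiForest {V E : Type*} (G : Multigraph V E) (I : Set E) : Prop :=
  Set.InjOn G.ends I ∧ (SimpleGraph.fromEdgeSet (G.ends '' I)).IsAcyclic

/-- The independence polytope `P(M(G))` of the graphic matroid of a multigraph `G`. -/
def multiIndepPolytope {V E : Type*} (G : Multigraph V E) : Set (E → ℝ) :=
  convexHull ℝ {x | ∃ I : Set E, IsMultiForest G I ∧ x = I.indicator fun _ => (1 : ℝ)}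

/-- The rank of a set of edges in the graphic matroid of a multigraph. -/
noncomputable def mrank {V E : Type*} (G : Multigraph V E) (A : Set E) : ℕ :=
  sSup {n | ∃ I ⊆ A, IsMultiForest G I ∧ I.ncard = n}

/-- A flat of the graphic matroid of a multigraph: adding any further edge increases the rank. -/
def IsGraphicFlat {V E : Type*} (G : Multigraph V E) (A : Set E) : Prop :=
  ∀ e : E, e ∉ A → mrank G (insert e A) ≠ mrank G A

/-- A circuit of the graphic matroid of a multigraph: a minimal dependent set of edges. -/
def IsMultiCircuit {V E : Type*} (G : Multigraph V E) (C : Set E) : Prop :=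
  ¬ IsMultiForest G C ∧ ∀ C' ⊂ C, IsMultiForest G C'

/-- The restriction of the graphic matroid of `G` to `A` is a connected matroid:
`A` is nonempty and any two distinct elements of `A` lie on a common circuit inside `A`. -/
def ConnectedRestriction {V E : Type*} (G : Multigraph V E) (A : Set E) : Prop :=
  A.Nonempty ∧ ∀ e ∈ A, ∀ f ∈ A, e ≠ f → ∃ C ⊆ A, IsMultiCircuit G C ∧ e ∈ C ∧ f ∈ C

/-- `G` is the `m`-blow-up of the simple graph `H`: every edge of `H` is replaced by exactly
`m` parallel edges and there are no other edges. -/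
def IsBlowUp {V E : Type*} (G : Multigraph V E) (m : ℕ) (H : SimpleGraph V) : Prop :=
  (∀ p ∈ H.edgeSet, {e : E | G.ends e = p}.ncard = m) ∧
  ∀ p : Sym2 V, p ∉ H.edgeSet → {e : E | G.ends e = p} = ∅

/-- The condition `(♣)_δ`: `(δ-1)|E(S)| + 1 = δ(|S|-1)` for every vertex subset `S` inducing a
`2`-connected subgraph. -/
def ClubCond {V : Type*} (H : SimpleGraph V) (δ : ℕ) : Prop :=
  ∀ S : Set V, IsTwoConnected (H.induce S) →
    (δ - 1) * (edgesIn H S).ncard + 1 = δ * (S.ncard - 1)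

/-! ### Chordality, `K₄` minors, cycle attachments -/

/-- A chordless cycle: a cycle such that every edge of `G` between vertices of the cycle is an
edge of the cycle. -/
def IsChordlessCycle {V : Type*} (G : SimpleGraph V) {v : V} (c : G.Walk v v) : Prop :=
  c.IsCycle ∧ ∀ e ∈ edgesIn G {u : V | u ∈ c.support}, e ∈ c.edges

/-- `G` is `δ`-chordal: every cycle without a chord has exactly `δ + 1` edges. -/
def IsDeltaChordal {V : Type*} (G : SimpleGraph V) (δ : ℕ) : Prop :=
  ∀ (v : V) (c : G.Walk v v), IsChordlessCycle G c → c.length = δ + 1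

/-- `G` has a `K₄` minor: there are four disjoint nonempty connected branch sets pairwise
joined by an edge. -/
def HasK4Minor {V : Type*} (G : SimpleGraph V) : Prop :=
  ∃ B : Fin 4 → Set V, (∀ i, (B i).Nonempty) ∧ (∀ i, (G.induce (B i)).Connected) ∧
    (Pairwise fun i j => Disjoint (B i) (B j)) ∧
    (Pairwise fun i j => ∃ u ∈ B i, ∃ v ∈ B j, G.Adj u v)

/-- One step of attaching a new `(δ+1)`-cycle to an edge: `B` is obtained from `A` by adding
`δ - 1` new vertices forming a path of length `δ` between the endpoints of an edge of
`H[A]`, these being all new edges. -/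
def AttachStep {V : Type*} (H : SimpleGraph V) (δ : ℕ) (A B : Set V) : Prop :=
  ∃ q : Fin (δ + 1) → V, Function.Injective q ∧
    H.Adj (q 0) (q (Fin.last δ)) ∧ q 0 ∈ A ∧ q (Fin.last δ) ∈ A ∧
    (∀ i : Fin (δ + 1), i ≠ 0 → i ≠ Fin.last δ → q i ∉ A) ∧
    B = A ∪ {x | ∃ i : Fin (δ + 1), i ≠ 0 ∧ i ≠ Fin.last δ ∧ q i = x} ∧
    edgesIn H B = edgesIn H A ∪ {e | ∃ i : Fin δ, e = s(q i.castSucc, q i.succ)}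

/-- `H` can be constructed from the clique `K₂` by repeatedly attaching new `(δ+1)`-cycles to
edges of the preceding graph. -/
def ConstructibleFromK2 {V : Type*} (H : SimpleGraph V) (δ : ℕ) : Prop :=
  ∃ (k : ℕ) (S : Fin (k + 1) → Set V),
    (∃ u v : V, H.Adj u v ∧ S 0 = {u, v}) ∧
    S (Fin.last k) = Set.univ ∧
    ∀ i : Fin k, AttachStep H δ (S i.castSucc) (S i.succ)

/-! ### Gluings, subdivisions, collisions, ears -/

/-- `G` (with distinguished edge `ab`) is the gluing of the graphs `Gs i` along the edges
`es i`: the disjoint union with all the edges `es i` identified to the single edge `ab`. -/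
def IsGluing {ι : Type*} {Vf : ι → Type*} {W : Type*} (Gs : ∀ i, SimpleGraph (Vf i))
    (es : ∀ i, Sym2 (Vf i)) (G : SimpleGraph W) (a b : W) : Prop :=
  a ≠ b ∧ G.Adj a b ∧
  ∃ φ : ∀ i, Vf i → W,
    (∀ i, Function.Injective (φ i)) ∧
    (∀ x : W, ∃ i, x ∈ Set.range (φ i)) ∧
    (∀ i, Sym2.map (φ i) (es i) = s(a, b)) ∧
    (∀ i j, i ≠ j → Set.range (φ i) ∩ Set.range (φ j) = {a, b}) ∧
    ∀ x y : W, G.Adj x y ↔ ∃ i, ∃ u v, (Gs i).Adj u v ∧ φ i u = x ∧ φ i v = y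

/-- `G'` together with the path `q` is the subdivision of `G` obtained by replacing the edge
`uv` by a path of `m` edges `q 0, …, q m` through new vertices. -/
def IsSubdivisionAt {V W : Type*} (G : SimpleGraph V) (u v : V) {m : ℕ}
    (G' : SimpleGraph W) (q : Fin (m + 1) → W) : Prop :=
  ∃ φ : V → W, Function.Injective φ ∧ Function.Injective q ∧
    q 0 = φ u ∧ q (Fin.last m) = φ v ∧
    (∀ i : Fin (m + 1), i ≠ 0 → i ≠ Fin.last m → q i ∉ Set.range φ) ∧
    (∀ x : W, x ∈ Set.range φ ∨ x ∈ Set.range q) ∧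
    ∀ x y : W, G'.Adj x y ↔
      ((∃ a b : V, G.Adj a b ∧ s(a, b) ≠ s(u, v) ∧ φ a = x ∧ φ b = y) ∨
       ∃ i : Fin m, s(x, y) = s(q i.castSucc, q i.succ))

/-- `G` (with the distinguished nonadjacent pair `a b`) is the collision of `G₁` and `G₂` on
the edges `e₁, e₂`: the disjoint union with `e₁` and `e₂` identified and then deleted. -/
def IsCollision {V₁ V₂ W : Type*} (G₁ : SimpleGraph V₁) (G₂ : SimpleGraph V₂)
    (e₁ : Sym2 V₁) (e₂ : Sym2 V₂) (G : SimpleGraph W) (a b : W) : Prop :=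
  a ≠ b ∧ ¬ G.Adj a b ∧
  ∃ (φ₁ : V₁ → W) (φ₂ : V₂ → W),
    Function.Injective φ₁ ∧ Function.Injective φ₂ ∧
    Sym2.map φ₁ e₁ = s(a, b) ∧ Sym2.map φ₂ e₂ = s(a, b) ∧
    (∀ x : W, x ∈ Set.range φ₁ ∨ x ∈ Set.range φ₂) ∧
    Set.range φ₁ ∩ Set.range φ₂ = {a, b} ∧
    ∀ x y : W, G.Adj x y ↔
      ((∃ u v, G₁.Adj u v ∧ s(u, v) ≠ e₁ ∧ φ₁ u = x ∧ φ₁ v = y) ∨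
       (∃ u v, G₂.Adj u v ∧ s(u, v) ≠ e₂ ∧ φ₂ u = x ∧ φ₂ v = y))

/-- The inner vertices of an ear. -/
def earInner {V : Type*} {s : ℕ} (p : Fin (s + 1) → V) : Set V :=
  {x | ∃ i : Fin (s + 1), i ≠ 0 ∧ i ≠ Fin.last s ∧ p i = x}

/-- The edges of an ear. -/
def earEdges {V : Type*} {s : ℕ} (p : Fin (s + 1) → V) : Set (Sym2 V) :=
  {e | ∃ i : Fin s, e = s(p i.castSucc, p i.succ)}

/-- An `s`-ear of `G`: a path with `s` edges whose inner vertices have degree `2` in `G`. -/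
def IsEar {V : Type*} (G : SimpleGraph V) {s : ℕ} (p : Fin (s + 1) → V) : Prop :=
  Function.Injective p ∧ (∀ i : Fin s, G.Adj (p i.castSucc) (p i.succ)) ∧
  ∀ i : Fin (s + 1), i ≠ 0 → i ≠ Fin.last s → (G.neighborSet (p i)).ncard = 2

/-- `T` is the vertex set of an inclusion-maximal proper `2`-connected induced subgraph. -/
def IsMaxProperTwoConnected {V : Type*} (G : SimpleGraph V) (T : Set V) : Prop :=
  IsTwoConnected (G.induce T) ∧ T ≠ Set.univ ∧
  ∀ T' : Set V, T ⊆ T' → T' ≠ Set.univ → IsTwoConnected (G.induce T') → T' = T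

/-! ### `(♠)₂` and `3`-connectivity -/

/-- A `2`-connected graph satisfies the equalities `(♠)₂`:
`|E| = 2(|V|-1)` and `|E(S)| = 2|S| - 3` for every good flat `S`. -/
def Spade2 {V : Type*} (G : SimpleGraph V) : Prop :=
  IsTwoConnected G ∧ G.edgeSet.ncard = 2 * (Nat.card V - 1) ∧
  ∀ S : Set V, IsGoodFlat G S → (edgesIn G S).ncard = 2 * S.ncard - 3

/-- A graph is `3`-connected if it has more than `3` vertices and remains connected after
deletion of any two vertices. -/
def IsThreeConnected {V : Type*} (G : SimpleGraph V) : Prop :=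
  3 < Nat.card V ∧ ∀ u v : V, (G.induce {x : V | x ≠ u ∧ x ≠ v}).Connected

/-! ### Inductive constructions -/

/-- Graphs obtainable from the `δ`-cycle by gluings (Proposition `construction1`) and
`(δ-1)`-subdivisions (Proposition `construction2`). -/
inductive Obtainable (δ : ℕ) : {W : Type} → SimpleGraph W → Prop
  | cycle {W : Type} (G : SimpleGraph W) (e : G ≃g SimpleGraph.cycleGraph δ) :
      Obtainable δ G
  | glue {Vf : Fin (δ - 1) → Type} {W : Type}
      (Gs : ∀ i, SimpleGraph (Vf i)) (ws : ∀ i, Sym2 (Vf i) → ℕ) (es : ∀ i, Sym2 (Vf i))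
      (G : SimpleGraph W) (a b : W)
      (hob : ∀ i, Obtainable δ (Gs i))
      (hsp : ∀ i, SatisfiesSpade (Gs i) δ (ws i))
      (hes : ∀ i, es i ∈ (Gs i).edgeSet)
      (hwe : ∀ i, ws i (es i) = δ - 1)
      (hgl : IsGluing Gs es G a b) : Obtainable δ G
  | subdivide {V W : Type} (G : SimpleGraph V) (w : Sym2 V → ℕ) (u v : V)
      (G' : SimpleGraph W) (q : Fin (δ - 1 + 1) → W)
      (hob : Obtainable δ G) (hsp : SatisfiesSpade G δ w)
      (huv : G.Adj u v) (hw1 : w s(u, v) = 1)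
      (hsub : IsSubdivisionAt G u v G' q) : Obtainable δ G'

/-- Graphs obtainable from the clique `K₄` by a finite sequence of collisions. -/
inductive ObtainableK4 : {W : Type} → SimpleGraph W → Prop
  | k4 {W : Type} (G : SimpleGraph W) (e : G ≃g (⊤ : SimpleGraph (Fin 4))) :
      ObtainableK4 G
  | collide {V₁ V₂ W : Type} (G₁ : SimpleGraph V₁) (G₂ : SimpleGraph V₂)
      (e₁ : Sym2 V₁) (e₂ : Sym2 V₂) (G : SimpleGraph W) (a b : W)
      (h₁ : ObtainableK4 G₁) (h₂ : ObtainableK4 G₂)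
      (he₁ : e₁ ∈ G₁.edgeSet) (he₂ : e₂ ∈ G₂.edgeSet)
      (hc : IsCollision G₁ G₂ e₁ e₂ G a b) : ObtainableK4 G

/-! ### Connected vertex sets -/

/-- Connectedness of the subgraph induced on `W`, expressed through cuts: `W` is nonempty and
every partition of `W` into two nonempty parts is crossed by an edge. -/
def Conn {V : Type*} (G : SimpleGraph V) (W : Set V) : Prop :=
  W.Nonempty ∧ ∀ X ⊆ W, X.Nonempty → (W \ X).Nonempty → ∃ x ∈ X, ∃ y ∈ W \ X, G.Adj x y

section ConnBasics

variable {V : Type*} {G : SimpleGraph V}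

theorem conn_of_connected {W : Set V} (h : (G.induce W).Connected) : Conn G W := by
  obtain ⟨⟨x0, hx0⟩⟩ := h.nonempty
  refine ⟨⟨x0, hx0⟩, fun X hXW ⟨x, hx⟩ ⟨y, hy⟩ => ?_⟩
  by_contra hcon
  push Not at hcon
  have key : ∀ z : W, (G.induce W).Reachable ⟨x, hXW hx⟩ z → z.1 ∈ X := by
    intro z hz
    rw [SimpleGraph.reachable_iff_reflTransGen] at hz
    induction hz with
    | refl => exact hx
    | tail _ hadj ih =>
      by_contra hn
      exact hcon _ ih _ ⟨Subtype.property _, hn⟩ hadj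
  exact hy.2 (key ⟨y, hy.1⟩ (h.preconnected _ _))

/-- Cut-connectedness of the image of an injective map gives connectedness of the source, for any
graph there containing the pulled back edges. -/
theorem connected_of_conn {α : Type*} {K : SimpleGraph α} {W : Set V} (φ : α → V)
    (hφ : Function.Injective φ) (hr : Set.range φ = W)
    (hadj : ∀ x y, G.Adj (φ x) (φ y) → K.Adj x y) (h : Conn G W) : K.Connected := by
  obtain ⟨w, hw⟩ := h.1
  rw [← hr] at hw
  obtain ⟨x0, -⟩ := hw
  have : Nonempty α := ⟨x0⟩
  refine SimpleGraph.Connected.mk fun x y => ?_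
  by_contra hn
  obtain ⟨u, ⟨x', hx', rfl⟩, v, ⟨hv, hv'⟩, huv⟩ :=
    h.2 (φ '' {z | K.Reachable x z}) (by rw [← hr]; exact Set.image_subset_range _ _)
      ⟨φ x, x, SimpleGraph.Reachable.refl _, rfl⟩
      ⟨φ y, by rw [← hr]; exact ⟨y, rfl⟩, by
        rintro ⟨z, hz, hzy⟩
        exact hn (hφ hzy ▸ hz)⟩
  rw [← hr] at hv
  obtain ⟨y', rfl⟩ := hv
  exact hv' ⟨y', SimpleGraph.Reachable.trans hx' (hadj _ _ huv).reachable, rfl⟩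

theorem Conn.connected {W : Set V} (h : Conn G W) : (G.induce W).Connected :=
  connected_of_conn Subtype.val Subtype.val_injective Subtype.range_coe (fun _ _ h => h) h

/-- A set `W` is connected as soon as it contains a connected core `K` such that no nonempty part
of `W` outside `K` is isolated from the rest of `W`. -/
theorem conn_extend {K W : Set V} (hK : Conn G K) (hKW : K ⊆ W)
    (h : ∀ Z ⊆ W \ K, Z.Nonempty → ∃ z ∈ Z, ∃ y ∈ W \ Z, G.Adj z y) : Conn G W := by
  refine ⟨hK.1.mono hKW, fun X hXW hX hY => ?_⟩
  by_cases h1 : (K ∩ X).Nonempty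
  · by_cases h2 : (K \ X).Nonempty
    · obtain ⟨x, hx, y, hy, hxy⟩ := hK.2 (K ∩ X) Set.inter_subset_left h1 (by simpa using h2)
      exact ⟨x, hx.2, y, ⟨hKW hy.1, fun hyX => hy.2 ⟨hy.1, hyX⟩⟩, hxy⟩
    · have hKX : K ⊆ X := by
        intro k hk
        by_contra hkX
        exact h2 ⟨k, hk, hkX⟩
      obtain ⟨z, hz, y, hy, hzy⟩ := h (W \ X) (fun z hz => ⟨hz.1, fun hk => hz.2 (hKX hk)⟩) hY
      exact ⟨y, by by_contra hyX; exact hy.2 ⟨hy.1, hyX⟩, z, hz, hzy.symm⟩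
  · exact h X (fun z hz => ⟨hXW hz, fun hk => h1 ⟨z, hk, hz⟩⟩) hX

theorem conn_singleton (x : V) : Conn G {x} := by
  refine ⟨⟨x, rfl⟩, ?_⟩
  rintro X hX ⟨y, hy⟩ ⟨z, hz, hzX⟩
  have h1 : y = x := hX hy
  have h2 : z = x := hz
  exact absurd (h2.trans h1.symm ▸ hy) hzX

theorem Conn.union {A B : Set V} (hA : Conn G A) (hB : Conn G B) {c : V} (hcA : c ∈ A)
    (hcB : c ∈ B) : Conn G (A ∪ B) := by
  refine conn_extend hA Set.subset_union_left fun Z hZ hZn => ?_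
  obtain ⟨x, hx, y, hy, hxy⟩ := hB.2 Z (by grind) hZn ⟨c, hcB, by grind⟩
  exact ⟨x, hx, y, ⟨Or.inr hy.1, hy.2⟩, hxy⟩

theorem Conn.insert_adj {U : Set V} (hU : Conn G U) {c u : V} (hu : u ∈ U) (h : G.Adj u c) :
    Conn G (insert c U) := by
  refine conn_extend hU (Set.subset_insert _ _) fun Z hZ hZn => ?_
  obtain ⟨z, hz⟩ := hZn
  have hzc : z = c := by have := hZ hz; grind
  exact ⟨z, hz, u, ⟨Or.inr hu, fun h' => (hZ h').2 hu⟩, hzc ▸ h.symm⟩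

theorem exists_split {W : Set V} (hW : W.Nonempty) (h : ¬ Conn G W) :
    ∃ X Y : Set V, X ∪ Y = W ∧ Disjoint X Y ∧ X.Nonempty ∧ Y.Nonempty ∧
      ∀ x ∈ X, ∀ y ∈ Y, ¬ G.Adj x y := by
  unfold Conn at h
  push Not at h
  obtain ⟨X, hXW, hX, hY, hn⟩ := h hW
  exact ⟨X, W \ X, Set.union_sdiff_cancel hXW, Set.disjoint_sdiff_right, hX, hY, hn⟩

/-- If `c` separates `W` into `X` and `Y`, then each part together with `c` is connected. -/
theorem Conn.insert_of_split {W X Y : Set V} {c : V} (hW : Conn G W) (hXY : X ∪ Y = W \ {c})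
    (hn : ∀ x ∈ X, ∀ y ∈ Y, ¬ G.Adj x y) (hc : c ∈ W) : Conn G (insert c X) := by
  have hm : ∀ z, (z ∈ X ∨ z ∈ Y) ↔ (z ∈ W ∧ z ≠ c) := fun z => by
    have := Set.ext_iff.1 hXY z
    simpa using this
  refine conn_extend (conn_singleton c) (by simp) fun Z hZ hZn => ?_
  obtain ⟨z, hz, y, hy, hzy⟩ := hW.2 Z (by intro z hz; have := hZ hz; grind) hZn
    ⟨c, hc, fun h => (hZ h).2 rfl⟩
  refine ⟨z, hz, y, ⟨?_, hy.2⟩, hzy⟩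
  have := hZ hz
  have := hn z
  grind

end ConnBasics

/-! ### The excess of a vertex set -/

section Excess

variable {V : Type*} {G : SimpleGraph V} {δ : ℕ}

/-- The excess `δ(|W| - 1) - (δ - 1)|E(W)|` of a vertex set `W`: for connected `G[W]` it is `δ`
times the rank of `E(W)` minus the weight of `E(W)`. -/
noncomputable def excess (G : SimpleGraph V) (δ : ℕ) (W : Set V) : ℤ :=
  δ * ((W.ncard : ℤ) - 1) - (δ - 1) * ((edgesIn G W).ncard : ℤ)

theorem excess_singleton (c : V) : excess G δ {c} = 0 := by
  have : edgesIn G {c} = ∅ := by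
    ext e
    induction e with | h x y =>
    simp only [edgesIn, Set.mem_ofPred_eq, SimpleGraph.mem_edgeSet, Sym2.mem_iff,
      Set.mem_singleton_iff, Set.mem_empty_iff_false, iff_false, not_and]
    intro h hh
    exact h.ne ((hh x (Or.inl rfl)).trans (hh y (Or.inr rfl)).symm)
  simp [excess, this]

theorem edgesIn_inter (A B : Set V) : edgesIn G (A ∩ B) = edgesIn G A ∩ edgesIn G B := by
  ext e; simp only [edgesIn, Set.mem_ofPred_eq, Set.mem_inter_iff]; grind

theorem edgesIn_union_subset (A B : Set V) :
    edgesIn G A ∪ edgesIn G B ⊆ edgesIn G (A ∪ B) := by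
  intro e; simp only [edgesIn, Set.mem_ofPred_eq, Set.mem_union]; grind

theorem nontrivial_insert {c : V} {X : Set V} (hc : c ∉ X) (hX : X.Nonempty) :
    (insert c X).Nontrivial := by
  obtain ⟨x, hx⟩ := hX
  exact ⟨c, Set.mem_insert _ _, x, Set.mem_insert_of_mem _ hx, fun h => hc (h ▸ hx)⟩

variable [Finite V]

/-- The excess is submodular. -/
theorem excess_submodular (hδ : 1 ≤ δ) (A B : Set V) :
    excess G δ (A ∪ B) + excess G δ (A ∩ B) ≤ excess G δ A + excess G δ B := by
  have h1 := Set.ncard_union_add_ncard_inter A B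
  have h2 := Set.ncard_union_add_ncard_inter (edgesIn G A) (edgesIn G B)
  have h3 := Set.ncard_le_ncard (edgesIn_union_subset (G := G) A B)
  rw [← edgesIn_inter] at h2
  have h4 : (A ∪ B).ncard + ((A ∩ B).ncard : ℤ) = A.ncard + B.ncard := by exact_mod_cast h1
  have h5 : ((edgesIn G A).ncard : ℤ) + (edgesIn G B).ncard ≤
    (edgesIn G (A ∪ B)).ncard + (edgesIn G (A ∩ B)).ncard := by exact_mod_cast (by omega)
  have h6 : (0 : ℤ) ≤ δ - 1 := by omega
  unfold excess
  have := mul_le_mul_of_nonneg_left h5 h6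
  linear_combination this + (δ : ℤ) * h4

/-- An edge between `A \ B` and `B \ A` improves submodularity by its weight `δ - 1`. -/
theorem excess_submodular_of_adj (hδ : 1 ≤ δ) {A B : Set V} {x y : V} (hx : x ∈ A \ B)
    (hy : y ∈ B \ A) (hxy : G.Adj x y) :
    excess G δ (A ∪ B) + excess G δ (A ∩ B) + (δ - 1) ≤ excess G δ A + excess G δ B := by
  have h1 := Set.ncard_union_add_ncard_inter A B
  have h2 := Set.ncard_union_add_ncard_inter (edgesIn G A) (edgesIn G B)
  have h3 : (edgesIn G A ∪ edgesIn G B).ncard < (edgesIn G (A ∪ B)).ncard := by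
    refine Set.ncard_lt_ncard ⟨edgesIn_union_subset A B, fun h => ?_⟩
    have h0 : s(x, y) ∈ edgesIn G (A ∪ B) := by
      simp only [edgesIn, Set.mem_ofPred_eq, SimpleGraph.mem_edgeSet, Sym2.mem_iff]
      grind
    have := h h0
    simp only [edgesIn, Set.mem_ofPred_eq, SimpleGraph.mem_edgeSet, Sym2.mem_iff,
      Set.mem_union] at this
    grind
  rw [← edgesIn_inter] at h2
  have h4 : (A ∪ B).ncard + ((A ∩ B).ncard : ℤ) = A.ncard + B.ncard := by exact_mod_cast h1
  have h5 : ((edgesIn G A).ncard : ℤ) + (edgesIn G B).ncard + 1 ≤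
    (edgesIn G (A ∪ B)).ncard + (edgesIn G (A ∩ B)).ncard := by exact_mod_cast (by omega)
  have h6 : (0 : ℤ) ≤ δ - 1 := by omega
  unfold excess
  have := mul_le_mul_of_nonneg_left h5 h6
  linear_combination this + (δ : ℤ) * h4

/-- Without edges between `A \ B` and `B \ A`, submodularity of the excess is an equality. -/
theorem excess_modular {A B : Set V} (h : ∀ x ∈ A \ B, ∀ y ∈ B \ A, ¬ G.Adj x y) :
    excess G δ (A ∪ B) + excess G δ (A ∩ B) = excess G δ A + excess G δ B := by
  have h1 := Set.ncard_union_add_ncard_inter A B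
  have h2 := Set.ncard_union_add_ncard_inter (edgesIn G A) (edgesIn G B)
  have h3 : edgesIn G A ∪ edgesIn G B = edgesIn G (A ∪ B) := by
    refine (edgesIn_union_subset A B).antisymm fun e he => ?_
    induction e with | h x y =>
    simp only [edgesIn, Set.mem_ofPred_eq, SimpleGraph.mem_edgeSet, Sym2.mem_iff,
      Set.mem_union] at he ⊢
    have h1 := h x
    have h2 := h y
    have h3 := he.1.symm
    grind
  rw [← edgesIn_inter, h3] at h2
  have h4 : (A ∪ B).ncard + ((A ∩ B).ncard : ℤ) = A.ncard + B.ncard := by exact_mod_cast h1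
  have h5 : ((edgesIn G (A ∪ B)).ncard : ℤ) + (edgesIn G (A ∩ B)).ncard =
    (edgesIn G A).ncard + (edgesIn G B).ncard := by exact_mod_cast h2
  unfold excess
  linear_combination (δ : ℤ) * h4 - (δ - 1 : ℤ) * h5

/-- If `X` and `Y` are the two sides of `W` at a separating vertex `c`, the excess of `W` is the
sum of the excesses of `X ∪ {c}` and `Y ∪ {c}`. -/
theorem excess_split {W X Y : Set V} {c : V} (hXY : X ∪ Y = W \ {c}) (hd : Disjoint X Y)
    (hn : ∀ x ∈ X, ∀ y ∈ Y, ¬ G.Adj x y) (hc : c ∈ W) :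
    excess G δ W = excess G δ (insert c X) + excess G δ (insert c Y) := by
  have hm : ∀ z, (z ∈ X ∨ z ∈ Y) ↔ (z ∈ W ∧ z ≠ c) := fun z => by
    have := Set.ext_iff.1 hXY z
    simpa using this
  have hd' := fun z (hz : z ∈ X) => Set.disjoint_left.1 hd hz
  have h := excess_modular (G := G) (δ := δ) (A := insert c X) (B := insert c Y) (by grind)
  have e1 : insert c X ∪ insert c Y = W := by
    ext z; have := hm z; simp only [Set.mem_union, Set.mem_insert_iff]; grind
  have e2 : insert c X ∩ insert c Y = {c} := by
    ext z; have := hm z; have := hd' z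
    simp only [Set.mem_inter_iff, Set.mem_insert_iff, Set.mem_singleton_iff]; grind
  rw [e1, e2, excess_singleton] at h
  linarith

/-- The facts about `G` used in the argument: `2`-connectedness in terms of cuts, and the
equalities of the condition `(♠)_δ` in terms of the excess. -/
structure Tight (G : SimpleGraph V) (δ : ℕ) : Prop where
  conn : Conn G Set.univ
  conn' : ∀ v, Conn G {v}ᶜ
  total : excess G δ Set.univ = 0
  good : ∀ T : Set V, Conn G T → (∀ v ∈ T, Conn G (T \ {v})) → Conn G Tᶜ → excess G δ T = 1

/-- The case of a connected complement: a set without separating vertex is a good flat, and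
otherwise induction applies to the two sides of a separating vertex. -/
theorem Tight.one_le_aux (hG : Tight G δ) (n : ℕ) : ∀ W : Set V, W.ncard = n → Conn G W →
    W.Nontrivial → Conn G Wᶜ → 1 ≤ excess G δ W := by
  induction n using Nat.strong_induction_on with
  | _ n ih =>
  intro W hWn hW hW2 hWc
  by_cases hall : ∀ v ∈ W, Conn G (W \ {v})
  · exact (hG.good W hW hall hWc).ge
  push Not at hall
  obtain ⟨c, hc, hnc⟩ := hall
  have hne : (W \ {c}).Nonempty := by
    obtain ⟨y, hy, hyc⟩ := hW2.exists_ne c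
    exact ⟨y, hy, hyc⟩
  obtain ⟨X, Y, hXY, hd, hX, hY, hn⟩ := exists_split hne hnc
  -- Each side of `c` has a connected complement, since `c` does not separate `G`.
  have side : ∀ X Y : Set V, X ∪ Y = W \ {c} → Disjoint X Y → X.Nonempty → Y.Nonempty →
      (∀ x ∈ X, ∀ y ∈ Y, ¬ G.Adj x y) → 1 ≤ excess G δ (insert c X) := by
    intro X Y hXY hd hX hY hn
    have hm : ∀ z, (z ∈ X ∨ z ∈ Y) ↔ (z ∈ W ∧ z ≠ c) := fun z => by
      have := Set.ext_iff.1 hXY z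
      simpa using this
    have hd' := fun z (hz : z ∈ X) => Set.disjoint_left.1 hd hz
    have hcX : c ∉ X := fun h => ((hm c).1 (Or.inl h)).2 rfl
    refine ih _ ?_ _ rfl (hW.insert_of_split hXY hn hc) (nontrivial_insert hcX hX) ?_
    · rw [← hWn]
      refine Set.ncard_lt_ncard ⟨?_, fun h => ?_⟩
      · intro z hz; have := hm z; grind
      · obtain ⟨y, hy⟩ := hY
        have := h ((hm y).1 (Or.inr hy)).1
        have := hm y
        have := hd' y
        grind
    · refine conn_extend hWc (fun z hz => ?_) fun Z hZ hZn => ?_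
      · have := hm z
        simp only [Set.mem_compl_iff, Set.mem_insert_iff] at hz ⊢
        grind
      · have hZY : ∀ z ∈ Z, z ∈ Y := fun z hz => by
          have := hZ hz
          have := hm z
          simp only [Set.mem_sdiff, Set.mem_compl_iff, Set.mem_insert_iff] at *
          grind
        obtain ⟨x, hx⟩ := hX
        obtain ⟨z, hz, y, hy, hzy⟩ := (hG.conn' c).2 Z
          (fun z hz => ((hm z).1 (Or.inr (hZY z hz))).2) hZn
          ⟨x, ((hm x).1 (Or.inl hx)).2, fun h => hd' x hx (hZY x h)⟩
        refine ⟨z, hz, y, ⟨?_, hy.2⟩, hzy⟩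
        have h1 := hn y
        have h2 := hy.1
        have h3 := hzy.symm
        have h4 := hZY z hz
        simp only [Set.mem_compl_iff, Set.mem_insert_iff, Set.mem_singleton_iff] at *
        grind
  rw [excess_split hXY hd hn hc]
  have h1 := side X Y hXY hd hX hY hn
  have h2 := side Y X (by rw [Set.union_comm]; exact hXY) hd.symm hY hX
    fun x hx y hy h => hn y hy x hx h.symm
  linarith

/-- Every connected proper vertex set with at least two vertices has positive excess. -/
theorem Tight.one_le (hG : Tight G δ) : ∀ {W : Set V}, Conn G W →
    W.Nontrivial → W ≠ Set.univ → 1 ≤ excess G δ W := by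
  suffices H : ∀ n : ℕ, ∀ W : Set V, Wᶜ.ncard = n → Conn G W →
      W.Nontrivial → W ≠ Set.univ → 1 ≤ excess G δ W from
    fun {W} h1 h2 h3 => H _ W rfl h1 h2 h3
  intro n
  induction n using Nat.strong_induction_on with
  | _ n ih =>
  intro W hWn hW hW2 hWu
  by_cases hWc : Conn G Wᶜ
  · exact hG.one_le_aux _ W rfl hW hW2 hWc
  -- `W` is the intersection of two larger sets, without crossing edges and with union `V`.
  obtain ⟨X, Y, hXY, hd, hX, hY, hn⟩ := exists_split (Set.nonempty_compl.2 hWu) hWc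
  have side : ∀ X Y : Set V, X ∪ Y = Wᶜ → Disjoint X Y → X.Nonempty → Y.Nonempty →
      (∀ x ∈ X, ∀ y ∈ Y, ¬ G.Adj x y) → 1 ≤ excess G δ (W ∪ X) := by
    intro X Y hXY hd hX hY hn
    have hm : ∀ z, (z ∈ X ∨ z ∈ Y) ↔ z ∉ W := fun z => Set.ext_iff.1 hXY z
    have hd' := fun z (hz : z ∈ X) => Set.disjoint_left.1 hd hz
    refine ih _ ?_ _ rfl ?_ (hW2.mono Set.subset_union_left) ?_
    · rw [← hWn]
      refine Set.ncard_lt_ncard ⟨Set.compl_subset_compl.2 Set.subset_union_left, fun h => ?_⟩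
      obtain ⟨x, hx⟩ := hX
      exact h ((hm x).1 (Or.inl hx)) (Or.inr hx)
    · refine conn_extend hW Set.subset_union_left fun Z hZ hZn => ?_
      obtain ⟨w, hw⟩ := hW.1
      obtain ⟨z, hz, y, hy, hzy⟩ := hG.conn.2 Z (Set.subset_univ _) hZn
        ⟨w, trivial, fun h => (hZ h).2 hw⟩
      refine ⟨z, hz, y, ⟨?_, hy.2⟩, hzy⟩
      have := hZ hz
      have := hm y
      have := hn z
      simp only [Set.mem_sdiff, Set.mem_union] at *
      grind
    · obtain ⟨y, hy⟩ := hY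
      intro h
      have : y ∈ W ∪ X := h ▸ trivial
      have := hm y
      have := hd' y
      simp only [Set.mem_union] at *
      grind
  have h1 := side X Y hXY hd hX hY hn
  have h2 := side Y X (by rw [Set.union_comm]; exact hXY) hd.symm hY hX
    fun x hx y hy h => hn y hy x hx h.symm
  have hd' := fun z (hz : z ∈ X) => Set.disjoint_left.1 hd hz
  have hm : ∀ z, (z ∈ X ∨ z ∈ Y) ↔ z ∉ W := fun z => Set.ext_iff.1 hXY z
  have h3 := excess_modular (G := G) (δ := δ) (A := W ∪ X) (B := W ∪ Y) (by
    simp only [Set.mem_sdiff, Set.mem_union]; grind)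
  have e1 : (W ∪ X) ∪ (W ∪ Y) = Set.univ := by
    ext z; have := hm z; simp only [Set.mem_union, Set.mem_univ]; grind
  have e2 : (W ∪ X) ∩ (W ∪ Y) = W := by
    ext z; have := hm z; have := hd' z
    simp only [Set.mem_inter_iff, Set.mem_union]; grind
  rw [e1, e2, hG.total] at h3
  linarith

/-- The two sides of a connected proper set at a separating vertex are connected and have
positive excess. -/
theorem Tight.split (hG : Tight G δ) {W : Set V} (hW : Conn G W) (hWu : W ≠ Set.univ) {X Y : Set V}
    {c : V} (hc : c ∈ W) (hXY : X ∪ Y = W \ {c}) (hX : X.Nonempty)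
    (hn : ∀ x ∈ X, ∀ y ∈ Y, ¬ G.Adj x y) :
    Conn G (insert c X) ∧ insert c X ≠ Set.univ ∧ (insert c X).Nontrivial ∧
      1 ≤ excess G δ (insert c X) := by
  have hm : ∀ z, (z ∈ X ∨ z ∈ Y) ↔ (z ∈ W ∧ z ≠ c) := fun z => by
    have := Set.ext_iff.1 hXY z
    simpa using this
  have h1 := hW.insert_of_split hXY hn hc
  have h2 : insert c X ≠ Set.univ := by
    intro h
    apply hWu
    rw [Set.eq_univ_iff_forall] at h ⊢
    intro z
    have := h z
    have := hm z
    grind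
  have h3 := nontrivial_insert (c := c) (X := X)
    (fun h => ((hm c).1 (Or.inl h)).2 rfl) hX
  exact ⟨h1, h2, h3, hG.one_le h1 h3 h2⟩

/-- A connected proper set of excess one has no separating vertex. -/
theorem Tight.conn_diff (hG : Tight G δ) {W : Set V} (hW : Conn G W) (hWu : W ≠ Set.univ)
    (hW2 : W.Nontrivial) (h1 : excess G δ W = 1) (c : V) : Conn G (W \ {c}) := by
  by_cases hc : c ∈ W
  swap
  · rwa [Set.sdiff_singleton_eq_self hc]
  by_contra hnc
  have hne : (W \ {c}).Nonempty := by
    obtain ⟨y, hy, hyc⟩ := hW2.exists_ne c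
    exact ⟨y, hy, hyc⟩
  obtain ⟨X, Y, hXY, hd, hX, hY, hn⟩ := exists_split hne hnc
  have h2 := (hG.split hW hWu hc hXY hX hn).2.2.2
  have h3 := (hG.split hW hWu hc (by rw [Set.union_comm]; exact hXY) hY
    fun x hx y hy h => hn y hy x hx h.symm).2.2.2
  have := excess_split (δ := δ) hXY hd hn hc
  linarith

end Excess

/-! ### Maximal connected sets avoiding an ear -/

section Ear

/-- If `K` is connected and covered by `X` and `Y` with no edge in between, then it lies on one
side. -/
theorem Conn.subset_or {V : Type*} {G : SimpleGraph V} {K X Y : Set V} (hK : Conn G K)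
    (hKXY : K ⊆ X ∪ Y) (hn : ∀ x ∈ X, ∀ y ∈ Y, ¬ G.Adj x y) : K ⊆ X ∨ K ⊆ Y := by
  by_contra! h
  obtain ⟨h1, h2⟩ := h
  rw [Set.not_subset] at h1 h2
  obtain ⟨y, hyK, hyX⟩ := h1
  obtain ⟨x, hxK, hxY⟩ := h2
  obtain ⟨z, hz, z', hz', hadj⟩ := hK.2 (K ∩ X) Set.inter_subset_left
    ⟨x, hxK, (hKXY hxK).resolve_right hxY⟩ ⟨y, hyK, fun h => hyX h.2⟩
  exact hn z hz.2 z' ((hKXY hz'.1).resolve_left fun h => hz'.2 ⟨hz'.1, h⟩) hadj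

variable {V : Type*} {G : SimpleGraph V} {δ : ℕ} {P : Set V} {a b : V}

/-- The situation to be excluded: `P` is the vertex set of a `(δ-1)`-ear with end vertices `a`
and `b`, and `P` has a connected complement. The path structure enters only through the excess
of `P` and of `{a, b}`. -/
structure EarSet (G : SimpleGraph V) (δ : ℕ) (P : Set V) (a b : V) : Prop where
  left_mem : a ∈ P
  right_mem : b ∈ P
  ne : a ≠ b
  inner : ∃ x ∈ P, x ≠ a ∧ x ≠ b
  conn : Conn G P
  compl : Conn G Pᶜ
  nbr : ∀ x ∈ P, x ≠ a → x ≠ b → ∀ y, G.Adj x y → y ∈ P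
  excess_path : excess G δ P = δ - 1
  excess_ends : excess G δ {a, b} = δ

/-- All vertices except the inner vertices of the ear. -/
def outer (P : Set V) (a b : V) : Set V := {x | x ∈ P → x = a ∨ x = b}

theorem mem_outer {x : V} : x ∈ outer P a b ↔ (x ∈ P → x = a ∨ x = b) := Iff.rfl

theorem EarSet.symm (h : EarSet G δ P a b) : EarSet G δ P b a where
  left_mem := h.right_mem
  right_mem := h.left_mem
  ne := h.ne.symm
  inner := by obtain ⟨x, h1, h2, h3⟩ := h.inner; exact ⟨x, h1, h3, h2⟩
  conn := h.conn
  compl := h.compl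
  nbr := fun x hx h1 h2 => h.nbr x hx h2 h1
  excess_path := h.excess_path
  excess_ends := by rw [Set.pair_comm]; exact h.excess_ends

/-- As `b` does not separate `G`, the ear is left through `a` too. -/
theorem EarSet.adj_left (hG : Tight G δ) (h : EarSet G δ P a b) : ∃ q ∉ P, G.Adj a q := by
  obtain ⟨x, hx, y, ⟨hyb, hy⟩, hxy⟩ := (hG.conn' b).2 Pᶜ
    (by rintro z hz rfl; exact hz h.right_mem) h.compl.1
    ⟨a, h.ne, fun h' => h' h.left_mem⟩
  have hyP : y ∈ P := not_not.1 hy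
  by_cases hya : y = a
  · exact ⟨x, hx, hya ▸ hxy.symm⟩
  · exact absurd (h.nbr y hyP hya hyb x hxy.symm) hx

theorem EarSet.conn_outer (hG : Tight G δ) (h : EarSet G δ P a b) : Conn G (outer P a b) := by
  refine conn_extend h.compl (fun z hz h' => absurd h' hz) fun Z hZ ⟨z, hz⟩ => ?_
  have h1 : z ∈ P := not_not.1 (hZ hz).2
  obtain ⟨q, hq, haq⟩ := h.adj_left hG
  obtain ⟨r, hr, hbr⟩ := h.symm.adj_left hG
  rcases (hZ hz).1 h1 with rfl | rfl
  · exact ⟨z, hz, q, ⟨fun h' => absurd h' hq, fun h' => (hZ h').2 hq⟩, haq⟩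
  · exact ⟨z, hz, r, ⟨fun h' => absurd h' hr, fun h' => (hZ h').2 hr⟩, hbr⟩

/-- `U` is a connected set avoiding the ear whose removal leaves `a` and `b` in the same
component of the rest of the outer graph. -/
structure Avoiding (G : SimpleGraph V) (P : Set V) (a b : V) (U : Set V) : Prop where
  conn : Conn G U
  subset : U ⊆ Pᶜ
  linked : ∃ N, Conn G N ∧ N ⊆ outer P a b \ U ∧ a ∈ N ∧ b ∈ N

/-- For a maximal avoiding set `U`, the rest `M` of the outer graph is connected: a part of `M`
cut off from `a` and `b` could be added to `U`. -/
theorem Avoiding.conn_rest (hG : Tight G δ) (h : EarSet G δ P a b) {U : Set V}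
    (hU : Maximal (Avoiding G P a b) U) : Conn G (outer P a b \ U) := by
  obtain ⟨⟨hUc, hUP, N, hN, hNs, haN, hbN⟩, hmax⟩ := hU
  refine conn_extend hN hNs fun Z hZ hZn => ?_
  by_contra! hcon
  have hZP : ∀ z ∈ Z, z ∉ P := fun z hz hzP => by
    have h1 := (hZ hz).1.1 hzP
    have h2 := (hZ hz).2
    grind
  have hav : Avoiding G P a b (U ∪ Z) := by
    refine ⟨conn_extend hUc Set.subset_union_left fun Z' hZ' hZn' => ?_, ?_, N, hN, ?_, haN, hbN⟩
    · have hZZ : Z' ⊆ Z := fun z hz => (hZ' hz).1.resolve_left (hZ' hz).2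
      obtain ⟨z, hz, y, hy, hzy⟩ := (h.conn_outer hG).2 Z' (fun z hz => (hZ (hZZ hz)).1.1) hZn'
        ⟨a, fun _ => Or.inl rfl, fun h' => (hZ (hZZ h')).2 haN⟩
      refine ⟨z, hz, y, ⟨?_, hy.2⟩, hzy⟩
      by_contra hyn
      exact hcon z (hZZ hz) y ⟨⟨hy.1, fun h => hyn (Or.inl h)⟩, fun h => hyn (Or.inr h)⟩ hzy
    · rintro z (hz | hz)
      exacts [hUP hz, hZP z hz]
    · intro x hx
      refine ⟨(hNs hx).1, ?_⟩
      rintro (hz | hz)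
      exacts [(hNs hx).2 hz, (hZ hz).2 hx]
  obtain ⟨z, hz⟩ := hZn
  exact (hZ hz).1.2 (hmax hav Set.subset_union_left (Or.inr hz))

/-- For a maximal avoiding set `U`, no vertex `v` separates `V \ U` in such a way that the end
vertices of the ear (other than `v`) lie on a common side `Y`. -/
theorem Avoiding.not_split (hG : Tight G δ) (h : EarSet G δ P a b) {U : Set V}
    (hU : Maximal (Avoiding G P a b) U) {v : V} (hvU : v ∉ U) {X Y : Set V}
    (hXY : X ∪ Y = Uᶜ \ {v}) (hd : Disjoint X Y) (hX : X.Nonempty)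
    (hn : ∀ x ∈ X, ∀ y ∈ Y, ¬ G.Adj x y) (ha : a ≠ v → a ∈ Y) (hb : b ≠ v → b ∈ Y) : False := by
  have hM := Avoiding.conn_rest hG h hU
  have hUP := hU.prop.subset
  have hm : ∀ z, (z ∈ X ∨ z ∈ Y) ↔ (z ∉ U ∧ z ≠ v) := fun z => by
    have := Set.ext_iff.1 hXY z
    simpa using this
  have hd' := fun z (hz : z ∈ X) => Set.disjoint_left.1 hd hz
  have haX : a ∉ X := fun h' => hd' a h' (ha ((hm a).1 (Or.inl h')).2)
  have hbX : b ∉ X := fun h' => hd' b h' (hb ((hm b).1 (Or.inl h')).2)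
  -- An edge leaving the part of `X` on the ear within `V \ {v}` would end in `Y`.
  have hXP : ∀ x ∈ X, x ∉ P := by
    intro x hx hxP
    obtain ⟨z, hz, y, hy, hzy⟩ := (hG.conn' v).2 (X ∩ P)
      (fun z hz => ((hm z).1 (Or.inl hz.1)).2) ⟨x, hx, hxP⟩ (by
        by_cases hav : a = v
        · exact ⟨b, fun hbv => h.ne (hav.trans (Eq.symm hbv)), fun h' => hbX h'.1⟩
        · exact ⟨a, hav, fun h' => haX h'.1⟩)
    have hyP : y ∈ P := h.nbr z hz.2 (fun h' => haX (h' ▸ hz.1)) (fun h' => hbX (h' ▸ hz.1)) y hzy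
    rcases (hm y).2 ⟨fun h' => hUP h' hyP, hy.1⟩ with h1 | h1
    · exact hy.2 ⟨h1, hyP⟩
    · exact hn z hz.1 y h1 hzy
  have hXM : X ⊆ outer P a b \ U := fun x hx =>
    ⟨fun h' => absurd h' (hXP x hx), ((hm x).1 (Or.inl hx)).1⟩
  have haM : a ∈ outer P a b \ U := ⟨fun _ => Or.inl rfl, fun h' => hUP h' h.left_mem⟩
  have hbM : b ∈ outer P a b \ U := ⟨fun _ => Or.inr rfl, fun h' => hUP h' h.right_mem⟩
  by_cases hv : v ∈ outer P a b
  swap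
  · obtain ⟨x, hx, y, hy, hxy⟩ := hM.2 X hXM hX ⟨a, haM, haX⟩
    rcases (hm y).2 ⟨hy.1.2, fun h' => hv (h' ▸ hy.1.1)⟩ with h1 | h1
    exacts [hy.2 h1, hn x hx y h1 hxy]
  have hvX : v ∉ X := fun h' => ((hm v).1 (Or.inl h')).2 rfl
  have hav : Avoiding G P a b (U ∪ X) := by
    refine ⟨conn_extend hU.prop.conn Set.subset_union_left fun Z hZ hZn => ?_, ?_,
      (outer P a b \ U) \ X, conn_extend (conn_singleton v) ?_ fun Z hZ hZn => ?_, ?_,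
      ⟨haM, haX⟩, ⟨hbM, hbX⟩⟩
    · have hZX : Z ⊆ X := fun z hz => (hZ hz).1.resolve_left (hZ hz).2
      obtain ⟨u, hu⟩ := hU.prop.conn.1
      obtain ⟨z, hz, y, hy, hzy⟩ := (hG.conn' v).2 Z
        (fun z hz => ((hm z).1 (Or.inl (hZX hz))).2) hZn
        ⟨u, fun h' => hvU (h' ▸ hu), fun h' => (hZ h').2 hu⟩
      refine ⟨z, hz, y, ⟨?_, hy.2⟩, hzy⟩
      by_contra hyn
      rcases (hm y).2 ⟨fun h' => hyn (Or.inl h'), hy.1⟩ with h1 | h1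
      exacts [hyn (Or.inr h1), hn z (hZX hz) y h1 hzy]
    · rintro z (hz | hz)
      exacts [hUP hz, hXP z hz]
    · rintro _ rfl
      exact ⟨⟨hv, hvU⟩, hvX⟩
    · obtain ⟨z, hz, y, hy, hzy⟩ := hM.2 Z (fun z hz => (hZ hz).1.1) hZn
        ⟨v, ⟨hv, hvU⟩, fun h' => (hZ h').2 rfl⟩
      refine ⟨z, hz, y, ⟨⟨hy.1, fun hyX => ?_⟩, hy.2⟩, hzy⟩
      rcases (hm z).2 ⟨(hZ hz).1.1.2, (hZ hz).2⟩ with h1 | h1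
      exacts [(hZ hz).1.2 h1, hn y hyX z h1 hzy.symm]
    · rintro x ⟨⟨h1, h2⟩, h3⟩
      exact ⟨h1, fun h' => h'.elim h2 h3⟩
  obtain ⟨x, hx⟩ := hX
  exact (hXM hx).2 (hU.2 hav Set.subset_union_left (Or.inr hx))

/-- The complement of a maximal avoiding set is a good flat, hence of excess one. -/
theorem Avoiding.excess_compl (hG : Tight G δ) (h : EarSet G δ P a b) {U : Set V}
    (hU : Maximal (Avoiding G P a b) U) : Conn G Uᶜ ∧ excess G δ Uᶜ = 1 := by
  have hM := Avoiding.conn_rest hG h hU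
  have hUP := hU.prop.subset
  have haM : a ∈ outer P a b \ U := ⟨fun _ => Or.inl rfl, fun h' => hUP h' h.left_mem⟩
  have hbM : b ∈ outer P a b \ U := ⟨fun _ => Or.inr rfl, fun h' => hUP h' h.right_mem⟩
  have hT : Conn G Uᶜ := by
    have : Uᶜ = (outer P a b \ U) ∪ P := by
      ext z
      have : z ∈ U → z ∉ P := fun h' => hUP h'
      simp only [Set.mem_compl_iff, Set.mem_union, Set.mem_sdiff, mem_outer]; grind
    rw [this]
    exact hM.union h.conn haM h.left_mem
  refine ⟨hT, hG.good _ hT (fun v hv => ?_) (by rw [compl_compl]; exact hU.prop.conn)⟩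
  by_contra hnc
  have hne : (Uᶜ \ {v}).Nonempty := by
    by_cases hav : a = v
    · exact ⟨b, hbM.2, fun hbv => h.ne (hav.trans (Eq.symm hbv))⟩
    · exact ⟨a, haM.2, hav⟩
  obtain ⟨X, Y, hXY, hd, hX, hY, hn⟩ := exists_split hne hnc
  have hm : ∀ z, (z ∈ X ∨ z ∈ Y) ↔ (z ∉ U ∧ z ≠ v) := fun z => by
    have := Set.ext_iff.1 hXY z
    simpa using this
  have key : ((a ≠ v → a ∈ X) ∧ (b ≠ v → b ∈ X)) ∨ ((a ≠ v → a ∈ Y) ∧ (b ≠ v → b ∈ Y)) := by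
    have h1 := (hm a).2
    have h2 := (hm b).2
    have h3 := haM.2
    have h4 := hbM.2
    by_cases hva : a = v
    · grind
    by_cases hvb : b = v
    · grind
    -- Otherwise `a` and `b` are joined in `M` or along the ear, avoiding `v`.
    by_cases hvP : v ∈ P
    · rcases hM.subset_or (X := X) (Y := Y) (fun z hz => (hm z).2 ⟨hz.2, fun hzv => by
        have := hz.1 (hzv ▸ hvP)
        grind⟩) hn with h5 | h5
      · exact Or.inl ⟨fun _ => h5 haM, fun _ => h5 hbM⟩
      · exact Or.inr ⟨fun _ => h5 haM, fun _ => h5 hbM⟩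
    · rcases h.conn.subset_or (X := X) (Y := Y) (fun z hz => (hm z).2 ⟨fun h' => hUP h' hz,
        fun hzv => hvP (hzv ▸ hz)⟩) hn with h5 | h5
      · exact Or.inl ⟨fun _ => h5 h.left_mem, fun _ => h5 h.right_mem⟩
      · exact Or.inr ⟨fun _ => h5 h.left_mem, fun _ => h5 h.right_mem⟩
  rcases key with ⟨h1, h2⟩ | ⟨h1, h2⟩
  · exact Avoiding.not_split hG h hU hv (by rw [Set.union_comm]; exact hXY) hd.symm hY
      (fun x hx y hy h => hn y hy x hx h.symm) h1 h2
  · exact Avoiding.not_split hG h hU hv hXY hd hX hn h1 h2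

variable [Finite V]

/-- The outer graph has excess one, hence no separating vertex. -/
theorem EarSet.conn_outer_diff (hG : Tight G δ) (h : EarSet G δ P a b) (v : V) :
    Conn G (outer P a b \ {v}) := by
  have hu : outer P a b ≠ Set.univ := by
    obtain ⟨x, hx, hxa, hxb⟩ := h.inner
    intro h'
    have : x ∈ outer P a b := h' ▸ trivial
    rcases this hx with h | h
    exacts [hxa h, hxb h]
  refine hG.conn_diff (h.conn_outer hG) hu
    ⟨a, fun _ => Or.inl rfl, b, fun _ => Or.inr rfl, h.ne⟩ ?_ v
  have h3 := excess_modular (G := G) (δ := δ) (A := outer P a b) (B := P) (by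
    rintro x ⟨-, hx⟩ y ⟨hy, hy'⟩ hxy
    rw [mem_outer] at hy'
    push Not at hy'
    exact hx (h.nbr y hy hy'.2.1 hy'.2.2 x hxy.symm))
  have e1 : outer P a b ∪ P = Set.univ := by
    ext z; simp only [Set.mem_union, mem_outer, Set.mem_univ]; grind
  have e2 : outer P a b ∩ P = {a, b} := by
    ext z
    have := h.left_mem
    have := h.right_mem
    simp only [Set.mem_inter_iff, mem_outer, Set.mem_insert_iff, Set.mem_singleton_iff]; grind
  rw [e1, e2, hG.total, h.excess_path, h.excess_ends] at h3
  linarith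

end Ear

/-! ### Two good flats meeting in the ear -/

section Contradiction

variable {V : Type*} [Finite V] {G : SimpleGraph V} {δ : ℕ} {P : Set V} {a b : V}

theorem Avoiding.exists_maximal {U₀ : Set V} (h : Avoiding G P a b U₀) :
    ∃ U, U₀ ⊆ U ∧ Maximal (Avoiding G P a b) U :=
  (Set.toFinite {U | Avoiding G P a b U}).exists_le_maximal h

/-- Two maximal avoiding sets covering the complement of the ear, the second one containing a
vertex `c` adjacent to the first one, violate submodularity of the excess. -/
theorem EarSet.false_of_cover (hG : Tight G δ) (hδ : 2 < δ) (h : EarSet G δ P a b) {U U' : Set V}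
    (hU : Maximal (Avoiding G P a b) U) (hU' : Maximal (Avoiding G P a b) U')
    (hcov : Pᶜ ⊆ U ∪ U') {u c : V} (hu : u ∈ U) (hc : c ∈ U') (hcU : c ∉ U) (huc : G.Adj u c) :
    False := by
  obtain ⟨hT, fT⟩ := Avoiding.excess_compl hG h hU
  obtain ⟨hT', fT'⟩ := Avoiding.excess_compl hG h hU'
  have hUP := hU.prop.subset
  have hUP' := hU'.prop.subset
  have e1 : Uᶜ ∩ U'ᶜ = P := by
    ext z
    have h1 : z ∈ U → z ∉ P := fun h' => hUP h'
    have h2 : z ∈ U' → z ∉ P := fun h' => hUP' h'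
    have h3 : z ∉ P → z ∈ U ∨ z ∈ U' := fun h' => hcov h'
    simp only [Set.mem_inter_iff, Set.mem_compl_iff]; grind
  by_cases hun : Uᶜ ∪ U'ᶜ = Set.univ
  · have huU' : u ∉ U' := by
      have h1 : u ∈ Uᶜ ∪ U'ᶜ := hun ▸ trivial
      exact h1.resolve_left fun h' => h' hu
    have := excess_submodular_of_adj (δ := δ) (by omega) (A := Uᶜ) (B := U'ᶜ) (x := c) (y := u)
      ⟨hcU, fun h' => h' hc⟩ ⟨huU', fun h' => h' hu⟩ huc.symm
    rw [hun, e1, hG.total, h.excess_path, fT, fT'] at this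
    omega
  · have haU : a ∈ Uᶜ := fun h' => hUP h' h.left_mem
    have hbU : b ∈ Uᶜ := fun h' => hUP h' h.right_mem
    have haU' : a ∈ U'ᶜ := fun h' => hUP' h' h.left_mem
    have h1 := hG.one_le (hT.union hT' haU haU') ⟨a, Or.inl haU, b, Or.inl hbU, h.ne⟩ hun
    have := excess_submodular (G := G) (δ := δ) (by omega) Uᶜ U'ᶜ
    rw [e1, h.excess_path, fT, fT'] at this
    omega

/-- Let `U` be a maximal avoiding set and let `c`, adjacent to `U`, separate the rest `M` of the
outer graph into sides containing `a` and `b` respectively, such that neither side together with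
`c` has a separating vertex. By maximality of `U`, only `a`, `b` and `c` have neighbours in `U`,
and both `a` and `b` do, because `c` does not separate the outer graph. So `M \ {a, b}` is
avoiding, and a maximal avoiding set containing it covers, together with `U`, the complement of
the ear. -/
theorem EarSet.false_of_split (hG : Tight G δ) (hδ : 2 < δ) (h : EarSet G δ P a b) {U : Set V}
    (hU : Maximal (Avoiding G P a b) U) {u c : V} (hu : u ∈ U) (huc : G.Adj u c)
    (hcM : c ∈ outer P a b \ U) {X Y : Set V}
    (hXY : X ∪ Y = (outer P a b \ U) \ {c}) (hd : Disjoint X Y)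
    (hn : ∀ x ∈ X, ∀ y ∈ Y, ¬ G.Adj x y)
    (hX : ∀ v, Conn G (insert c X \ {v})) (hY : ∀ v, Conn G (insert c Y \ {v}))
    (haX : a ∈ X) (hbY : b ∈ Y) : False := by
  have hUP := hU.prop.subset
  have hm : ∀ z, (z ∈ X ∨ z ∈ Y) ↔ ((z ∈ outer P a b ∧ z ∉ U) ∧ z ≠ c) := fun z => by
    have := Set.ext_iff.1 hXY z
    simpa using this
  have hd' := fun z (hz : z ∈ X) => Set.disjoint_left.1 hd hz
  have hac := ((hm a).1 (Or.inl haX)).2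
  have hbc := ((hm b).1 (Or.inr hbY)).2
  -- If some other vertex had a neighbour in `U`, it could be added to `U`.
  have key : ∀ x, (x ∈ X ∨ x ∈ Y) → x ≠ a → x ≠ b → ∀ v ∈ U, ¬ G.Adj v x := by
    intro x hx hxa hxb v hv hvx
    obtain ⟨⟨hxo, hxU⟩, hxc⟩ := (hm x).1 hx
    refine hxU (hU.2 (y := insert x U) ⟨hU.prop.conn.insert_adj hv hvx, ?_,
      (insert c X \ {x}) ∪ (insert c Y \ {x}), (hX x).union (hY x) ⟨Or.inl rfl, Ne.symm hxc⟩
        ⟨Or.inl rfl, Ne.symm hxc⟩, ?_, Or.inl ⟨Or.inr haX, Ne.symm hxa⟩,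
        Or.inr ⟨Or.inr hbY, Ne.symm hxb⟩⟩ (Set.subset_insert _ _) (Or.inl rfl))
    · rintro z (rfl | hz)
      · exact fun hzP => (hxo hzP).elim hxa hxb
      · exact hUP hz
    · intro z hz
      have hz' : (z = c ∨ z ∈ X ∨ z ∈ Y) ∧ z ≠ x := by
        simp only [Set.mem_union, Set.mem_sdiff, Set.mem_insert_iff, Set.mem_singleton_iff] at hz
        grind
      have hzM : z ∈ outer P a b \ U := by
        rcases hz'.1 with rfl | hz1
        exacts [hcM, ((hm z).1 hz1).1]
      exact ⟨hzM.1, fun h' => h'.elim hz'.2 hzM.2⟩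
  have hadj : ∀ v, v ∈ X ∨ v ∈ Y → v ∉ U := fun v hv => ((hm v).1 hv).1.2
  obtain ⟨ua, hua, haua⟩ : ∃ v ∈ U, G.Adj v a := by
    obtain ⟨x, hx, y, ⟨⟨hyo, hyc⟩, hyX⟩, hxy⟩ := (h.conn_outer_diff hG c).2 X
      (fun z hz => ⟨((hm z).1 (Or.inl hz)).1.1, ((hm z).1 (Or.inl hz)).2⟩) ⟨a, haX⟩
      ⟨b, ⟨fun _ => Or.inr rfl, hbc⟩, fun h' => hd' b h' hbY⟩
    have hyU : y ∈ U := by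
      by_contra hyU
      rcases (hm y).2 ⟨⟨hyo, hyU⟩, hyc⟩ with h1 | h1
      exacts [hyX h1, hn x hx y h1 hxy]
    by_cases hxa : x = a
    · exact ⟨y, hyU, hxa ▸ hxy.symm⟩
    · exact absurd hxy.symm (key x (Or.inl hx) hxa (fun h' => hd' x hx (h' ▸ hbY)) y hyU)
  obtain ⟨ub, hub, hbub⟩ : ∃ v ∈ U, G.Adj v b := by
    obtain ⟨x, hx, y, ⟨⟨hyo, hyc⟩, hyX⟩, hxy⟩ := (h.conn_outer_diff hG c).2 Y
      (fun z hz => ⟨((hm z).1 (Or.inr hz)).1.1, ((hm z).1 (Or.inr hz)).2⟩) ⟨b, hbY⟩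
      ⟨a, ⟨fun _ => Or.inl rfl, hac⟩, fun h' => hd' a haX h'⟩
    have hyU : y ∈ U := by
      by_contra hyU
      rcases (hm y).2 ⟨⟨hyo, hyU⟩, hyc⟩ with h1 | h1
      exacts [hn y h1 x hx hxy.symm, hyX h1]
    by_cases hxb : x = b
    · exact ⟨y, hyU, hxb ▸ hxy.symm⟩
    · exact absurd hxy.symm (key x (Or.inr hx) (fun h' => hd' a haX (h' ▸ hx)) hxb y hyU)
  -- Now `a` and `b` are linked through `U`, so that `M \ {a, b}` is avoiding as well.
  have hav : Avoiding G P a b ((insert c X \ {a}) ∪ (insert c Y \ {b})) := by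
    refine ⟨(hX a).union (hY b) ⟨Or.inl rfl, Ne.symm hac⟩ ⟨Or.inl rfl, Ne.symm hbc⟩, ?_,
      insert a (insert b U), (hU.prop.conn.insert_adj hub hbub).insert_adj (Or.inr hua) haua, ?_,
      Or.inl rfl, Or.inr (Or.inl rfl)⟩
    · intro z hz hzP
      have h1 := (hm z).1
      have h2 : z ∈ outer P a b := by
        rcases hz with ⟨rfl | hz, -⟩ | ⟨rfl | hz, -⟩
        exacts [hcM.1, (h1 (Or.inl hz)).1.1, hcM.1, (h1 (Or.inr hz)).1.1]
      rcases h2 hzP with rfl | rfl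
      · rcases hz with ⟨-, hz⟩ | ⟨rfl | hz, -⟩
        exacts [hz rfl, hac rfl, hd' _ haX hz]
      · rcases hz with ⟨rfl | hz, -⟩ | ⟨-, hz⟩
        exacts [hbc rfl, hd' _ hz hbY, hz rfl]
    · intro z hz
      have h3 := hcM.2
      have h1 := hadj z
      have h2 : z ∈ U → z ∉ P := fun h' => hUP h'
      have h4 := hd' a haX
      have h5 := hd' b
      simp only [Set.mem_union, Set.mem_sdiff, Set.mem_insert_iff, Set.mem_singleton_iff,
        mem_outer] at *
      grind
  obtain ⟨U', hsub, hU'⟩ := hav.exists_maximal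
  refine h.false_of_cover hG hδ hU hU' (fun z hz => ?_) hu
    (hsub (Or.inl ⟨Or.inl rfl, Ne.symm hac⟩)) hcM.2 huc
  by_cases hzU : z ∈ U
  · exact Or.inl hzU
  · refine Or.inr (hsub ?_)
    have hza : z ≠ a := fun h' => hz (h' ▸ h.left_mem)
    have hzb : z ≠ b := fun h' => hz (h' ▸ h.right_mem)
    by_cases hzc : z = c
    · exact Or.inl ⟨Or.inl hzc, hza⟩
    · rcases (hm z).2 ⟨⟨fun h' => absurd h' hz, hzU⟩, hzc⟩ with h1 | h1
      exacts [Or.inl ⟨Or.inr h1, hza⟩, Or.inr ⟨Or.inr h1, hzb⟩]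

/-- For a maximal avoiding set `U`, the rest `M` of the outer graph has excess two. A vertex `c` of
`M` adjacent to `U` separates `a` from `b` in `M` by maximality, and the excess of `M` splits as
`1 + 1` at `c`. -/
theorem EarSet.contradiction (hG : Tight G δ) (hδ : 2 < δ) (h : EarSet G δ P a b) : False := by
  obtain ⟨u₀, hu₀⟩ := h.compl.1
  have hne : a ≠ u₀ ∧ b ≠ u₀ :=
    ⟨fun h' => hu₀ (h' ▸ h.left_mem), fun h' => hu₀ (h' ▸ h.right_mem)⟩
  have hav : Avoiding G P a b {u₀} :=
    ⟨conn_singleton u₀, by rintro _ rfl; exact hu₀, _, h.conn_outer_diff hG u₀, subset_rfl,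
      ⟨fun _ => Or.inl rfl, hne.1⟩, ⟨fun _ => Or.inr rfl, hne.2⟩⟩
  obtain ⟨U, -, hU⟩ := hav.exists_maximal
  obtain ⟨hT, fT⟩ := Avoiding.excess_compl hG h hU
  have hM := Avoiding.conn_rest hG h hU
  have hUP := hU.prop.subset
  have haM : a ∈ outer P a b \ U := ⟨fun _ => Or.inl rfl, fun h' => hUP h' h.left_mem⟩
  have hbM : b ∈ outer P a b \ U := ⟨fun _ => Or.inr rfl, fun h' => hUP h' h.right_mem⟩
  have fM : excess G δ (outer P a b \ U) = 2 := by
    have h3 := excess_modular (G := G) (δ := δ) (A := outer P a b \ U) (B := P) (by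
      rintro x ⟨⟨-, hxU⟩, hx⟩ y ⟨hy, hy'⟩ hxy
      have hy2 : ¬ (y = a ∨ y = b) := fun h' => hy' ⟨fun _ => h', fun h' => hUP h' hy⟩
      push Not at hy2
      exact hx (h.nbr y hy hy2.1 hy2.2 x hxy.symm))
    have hz : ∀ z ∈ U, z ∉ P := fun z h' => hUP h'
    have e1 : (outer P a b \ U) ∪ P = Uᶜ := by
      ext z; simp only [Set.mem_union, Set.mem_sdiff, mem_outer, Set.mem_compl_iff]; grind
    have e2 : (outer P a b \ U) ∩ P = {a, b} := by
      ext z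
      have := h.left_mem
      have := h.right_mem
      simp only [Set.mem_inter_iff, Set.mem_sdiff, mem_outer, Set.mem_insert_iff,
        Set.mem_singleton_iff]
      grind
    rw [e1, e2, fT, h.excess_path, h.excess_ends] at h3
    linarith
  -- As `{a, b}` has excess `δ > 2`, there are further vertices in `M`.
  have hQ : (Pᶜ \ U).Nonempty := by
    by_contra hQ
    have : outer P a b \ U = {a, b} := by
      ext z
      have h1 : z ∉ P → z ∈ U := fun h1 => by
        by_contra h2
        exact hQ ⟨z, h1, h2⟩
      have h2 : z = a → z ∈ outer P a b \ U := fun h' => h' ▸ haM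
      have h3 : z = b → z ∈ outer P a b \ U := fun h' => h' ▸ hbM
      simp only [Set.mem_sdiff, mem_outer, Set.mem_insert_iff, Set.mem_singleton_iff] at *
      grind
    rw [this, h.excess_ends] at fM
    omega
  obtain ⟨u, hu, c, ⟨hcP, hcU⟩, huc⟩ := h.compl.2 U hUP hU.prop.conn.1 hQ
  have hac : a ≠ c := fun h' => hcP (h' ▸ h.left_mem)
  have hbc : b ≠ c := fun h' => hcP (h' ▸ h.right_mem)
  have hcM : c ∈ outer P a b \ U := ⟨fun h' => absurd h' hcP, hcU⟩
  -- By maximality, `c` separates `a` from `b` in `M`.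
  have hnot : ∀ N, Conn G N → N ⊆ (outer P a b \ U) \ {c} → a ∈ N → b ∈ N → False :=
    fun N hN hNs haN hbN => hcU (hU.2 (y := insert c U) ⟨hU.prop.conn.insert_adj hu huc, by
      rintro z (rfl | hz)
      exacts [hcP, hUP hz], N, hN, fun z hz => ⟨(hNs hz).1.1, fun h' =>
        h'.elim (hNs hz).2 (hNs hz).1.2⟩, haN, hbN⟩ (Set.subset_insert _ _) (Or.inl rfl))
  obtain ⟨X, Y, hXY, hd, hX, hY, hn⟩ := exists_split
    (W := (outer P a b \ U) \ {c}) ⟨a, haM, hac⟩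
    (fun hcon => hnot _ hcon subset_rfl ⟨haM, hac⟩ ⟨hbM, hbc⟩)
  have hn' : ∀ y ∈ Y, ∀ x ∈ X, ¬ G.Adj y x := fun y hy x hx h => hn x hx y hy h.symm
  have hYX : Y ∪ X = (outer P a b \ U) \ {c} := by rw [Set.union_comm]; exact hXY
  have hMu : outer P a b \ U ≠ Set.univ := fun h' => by
    have : u ∈ outer P a b \ U := h' ▸ trivial
    exact this.2 hu
  obtain ⟨x1, x2, x3, x4⟩ := hG.split hM hMu hcM hXY hX hn
  obtain ⟨y1, y2, y3, y4⟩ := hG.split hM hMu hcM hYX hY hn'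
  have hsum := excess_split (δ := δ) hXY hd hn hcM
  have hXv := hG.conn_diff x1 x2 x3 (by linarith)
  have hYv := hG.conn_diff y1 y2 y3 (by linarith)
  have hcc : ∀ Z : Set V, c ∉ Z → insert c Z \ {c} = Z := fun Z hZ => by
    ext z; simp only [Set.mem_sdiff, Set.mem_insert_iff, Set.mem_singleton_iff]; grind
  have hcXY : c ∉ X ∪ Y := fun h' => by rw [hXY] at h'; exact h'.2 rfl
  have hXc : Conn G X := by
    have := hXv c
    rwa [hcc X fun h' => hcXY (Or.inl h')] at this
  have hYc : Conn G Y := by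
    have := hYv c
    rwa [hcc Y fun h' => hcXY (Or.inr h')] at this
  have ha : a ∈ X ∪ Y := hXY ▸ ⟨haM, hac⟩
  have hb : b ∈ X ∪ Y := hXY ▸ ⟨hbM, hbc⟩
  rcases ha with ha | ha <;> rcases hb with hb | hb
  · exact hnot X hXc (hXY ▸ Set.subset_union_left) ha hb
  · exact h.false_of_split hG hδ hU hu huc hcM hXY hd hn hXv hYv ha hb
  · exact h.false_of_split hG hδ hU hu huc hcM hYX hd.symm hn' hYv hXv ha hb
  · exact hnot Y hYc (hYX ▸ Set.subset_union_left) ha hb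

end Contradiction

/-! ### Contractions and good flats -/

section Contract

variable {V : Type*} {G : SimpleGraph V}

/-- Contracting edges inside `S` identifies vertices of `S` only. -/
theorem eq_or_mem_of_mk_eq {F : Set (Sym2 V)} {S : Set V} (hF : ∀ e ∈ F, ∀ v ∈ e, v ∈ S) {u v : V}
    (h : (SimpleGraph.fromEdgeSet F).connectedComponentMk u =
      (SimpleGraph.fromEdgeSet F).connectedComponentMk v) : u = v ∨ (u ∈ S ∧ v ∈ S) := by
  have h1 := SimpleGraph.ConnectedComponent.exact h
  rw [SimpleGraph.reachable_iff_reflTransGen] at h1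
  induction h1 with
  | refl => exact Or.inl rfl
  | @tail x y hx hxy ih =>
    have h2 := (SimpleGraph.fromEdgeSet_adj F).1 hxy
    have h3 : x ∈ S := hF _ h2.1 x (Sym2.mem_mk_left _ _)
    have h4 : y ∈ S := hF _ h2.1 y (Sym2.mem_mk_right _ _)
    rcases ih (h.trans (SimpleGraph.ConnectedComponent.sound hxy.reachable).symm) with rfl | h5
    exacts [Or.inr ⟨h3, h4⟩, Or.inr ⟨h5.1, h4⟩]

theorem mk_eq_of_mem {F : Set (Sym2 V)} {x y : V} (h : s(x, y) ∈ F) :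
    (SimpleGraph.fromEdgeSet F).connectedComponentMk x =
      (SimpleGraph.fromEdgeSet F).connectedComponentMk y := by
  by_cases hxy : x = y
  · rw [hxy]
  · exact SimpleGraph.ConnectedComponent.sound
      (SimpleGraph.Adj.reachable ((SimpleGraph.fromEdgeSet_adj F).2 ⟨h, hxy⟩))

theorem mk_eq_of_conn {T : Set V} (hT : Conn G T) {u v : V} (hu : u ∈ T) (hv : v ∈ T) :
    (SimpleGraph.fromEdgeSet (edgesIn G T)).connectedComponentMk u =
      (SimpleGraph.fromEdgeSet (edgesIn G T)).connectedComponentMk v := by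
  by_contra hne
  obtain ⟨x, hx, y, hy, hxy⟩ := hT.2
    {z ∈ T | (SimpleGraph.fromEdgeSet (edgesIn G T)).connectedComponentMk u =
      (SimpleGraph.fromEdgeSet (edgesIn G T)).connectedComponentMk z}
    (fun z hz => hz.1) ⟨u, hu, rfl⟩ ⟨v, hv, fun h => hne h.2⟩
  refine hy.2 ⟨hy.1, hx.2.trans (mk_eq_of_mem ⟨hxy, fun z hz => ?_⟩)⟩
  rcases Sym2.mem_iff.1 hz with rfl | rfl
  exacts [hx.1, hy.1]

/-- A set of vertices of the contraction is connected if its preimage in `G` is. -/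
theorem conn_contract {F : Set (Sym2 V)}
    {S : Set (SimpleGraph.fromEdgeSet F).ConnectedComponent}
    (h : Conn G {v | (SimpleGraph.fromEdgeSet F).connectedComponentMk v ∈ S}) :
    Conn (contractEdges G F) S := by
  refine ⟨h.1.elim fun v hv => ⟨_, hv⟩, ?_⟩
  rintro X hXS ⟨x, hx⟩ ⟨y, hy⟩
  obtain ⟨x, rfl⟩ := x.exists_rep
  obtain ⟨y, rfl⟩ := y.exists_rep
  obtain ⟨u, hu, v, ⟨hvS, hvX⟩, huv⟩ := h.2
    {v | (SimpleGraph.fromEdgeSet F).connectedComponentMk v ∈ X} (fun v hv => hXS hv)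
    ⟨x, hx⟩ ⟨y, hy.1, hy.2⟩
  refine ⟨_, hu, _, ⟨hvS, hvX⟩, (SimpleGraph.fromRel_adj _ _ _).2
    ⟨fun h => hvX (by change _ ∈ X; rw [← h]; exact hu), Or.inl ⟨u, v, huv, rfl, rfl⟩⟩⟩

/-- If the contraction of `F` collapses `S` to a vertex `k` and does nothing else, deleting `k`
from the contraction amounts to deleting `S` from `G`. -/
theorem conn_of_contract {F : Set (Sym2 V)} {S : Set V} (hF : ∀ e ∈ F, ∀ v ∈ e, v ∈ S)
    {k : (SimpleGraph.fromEdgeSet F).ConnectedComponent}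
    (hk : ∀ v ∈ S, (SimpleGraph.fromEdgeSet F).connectedComponentMk v = k)
    (hne : S.Nonempty)
    (h : Conn (contractEdges G F) {c | c ≠ k}) : Conn G Sᶜ := by
  have hmem : ∀ v, (SimpleGraph.fromEdgeSet F).connectedComponentMk v ≠ k ↔ v ∉ S := by
    intro v
    refine ⟨fun h hv => h (hk v hv), fun hv h => ?_⟩
    obtain ⟨w, hw⟩ := hne
    rcases eq_or_mem_of_mk_eq hF (h.trans (hk w hw).symm) with h1 | h1
    exacts [hv (h1 ▸ hw), hv h1.1]
  have hinj : ∀ u v, v ∉ S → (SimpleGraph.fromEdgeSet F).connectedComponentMk u =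
      (SimpleGraph.fromEdgeSet F).connectedComponentMk v → u = v := fun u v hv h =>
    (eq_or_mem_of_mk_eq hF h).resolve_right fun h' => hv h'.2
  refine ⟨?_, fun X hXS ⟨x, hx⟩ ⟨y, hy⟩ => ?_⟩
  · obtain ⟨c, hc⟩ := h.1
    obtain ⟨v, rfl⟩ := c.exists_rep
    exact ⟨v, (hmem v).1 hc⟩
  · obtain ⟨_, ⟨x', hx', rfl⟩, d, ⟨hd, hdX⟩, hadj⟩ := h.2
      ((SimpleGraph.fromEdgeSet F).connectedComponentMk '' X)
      (by rintro _ ⟨z, hz, rfl⟩; exact (hmem z).2 (hXS hz)) ⟨_, x, hx, rfl⟩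
      ⟨(SimpleGraph.fromEdgeSet F).connectedComponentMk y, (hmem y).2 hy.1, by
        rintro ⟨z, hz, hzy⟩
        exact hy.2 (hinj z y hy.1 hzy ▸ hz)⟩
    obtain ⟨u, v, huv, hu, hv⟩ : ∃ u v : V, G.Adj u v ∧
        (SimpleGraph.fromEdgeSet F).connectedComponentMk u =
          (SimpleGraph.fromEdgeSet F).connectedComponentMk x' ∧
        (SimpleGraph.fromEdgeSet F).connectedComponentMk v = d := by
      rcases ((SimpleGraph.fromRel_adj _ _ _).1 hadj).2 with ⟨u, v, h1, h2, h3⟩ | ⟨u, v, h1, h2, h3⟩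
      exacts [⟨u, v, h1, h2, h3⟩, ⟨v, u, h1.symm, h3, h2⟩]
    have hux := hinj u x' (hXS hx') hu
    subst hv
    exact ⟨x', hx', v, ⟨(hmem v).1 hd, fun hvX => hdX ⟨v, hvX, rfl⟩⟩, hux ▸ huv⟩

theorem edgesIn_mem {T : Set V} : ∀ e ∈ edgesIn G T, ∀ v ∈ e, v ∈ T := fun _ he => he.2

/-- Good flats in terms of cuts: in the contraction of `E(T)`, deleting the vertex `T` leaves
`V \ T`, and deleting any other vertex `v` leaves a quotient of `V \ {v}`. -/
theorem isGoodFlat_of_conn (hu : Conn G Set.univ) (hd : ∀ v, Conn G {v}ᶜ) {T : Set V}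
    (hT : Conn G T) (hTd : ∀ v ∈ T, Conn G (T \ {v})) (hTc : Conn G Tᶜ) : IsGoodFlat G T := by
  refine ⟨⟨hT.connected, fun v => ?_⟩, ?_, fun k => Conn.connected (conn_contract ?_)⟩
  · refine connected_of_conn (fun x => x.1.1) (fun x y h => Subtype.ext (Subtype.ext h)) ?_
      (fun _ _ h => h) (hTd v.1 v.2)
    ext z
    constructor
    · rintro ⟨⟨x, hx⟩, rfl⟩
      exact ⟨x.2, fun h => hx (Subtype.ext h)⟩
    · rintro ⟨hz, hzv⟩
      exact ⟨⟨⟨z, hz⟩, fun h => hzv (congrArg Subtype.val h)⟩, rfl⟩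
  · exact connected_of_conn id Function.injective_id Set.range_id (fun _ _ h => h)
      (conn_contract (S := Set.univ) (by simpa using hu))
  · obtain ⟨v, rfl⟩ := k.exists_rep
    by_cases hv : v ∈ T
    · convert hTc using 1
      ext z
      refine ⟨fun hz hzT => hz (mk_eq_of_conn hT hzT hv), fun hz h => ?_⟩
      rcases eq_or_mem_of_mk_eq edgesIn_mem h with rfl | h1
      exacts [hz hv, hz h1.1]
    · convert hd v using 1
      ext z
      refine ⟨fun hz hzv => hz (by rw [show z = v from hzv]; rfl), fun hz h => ?_⟩
      rcases eq_or_mem_of_mk_eq edgesIn_mem h with h1 | h1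
      exacts [hz h1, hv h1.2]

variable [Finite V] {δ : ℕ}

/-- When all weights are `δ - 1`, the condition `(♠)_δ` is a condition on excesses. -/
theorem SatisfiesSpade.tight (hδ : 1 ≤ δ) {w : Sym2 V → ℕ} (hsp : SatisfiesSpade G δ w)
    (hall : ∀ e ∈ G.edgeSet, w e = δ - 1) : Tight G δ := by
  obtain ⟨⟨h1, h2⟩, -, h3, h4⟩ := hsp
  have hsum : ∀ F ⊆ G.edgeSet, ∑ᶠ e ∈ F, w e = F.ncard * (δ - 1) := by
    intro F hF
    rw [finsum_mem_congr rfl fun e he => hall e (hF he), finsum_mem_eq_finite_toFinset_sum _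
      (Set.toFinite F), Finset.sum_const, smul_eq_mul, Set.ncard_eq_toFinset_card F]
  have huniv : Conn G Set.univ := by
    have := h1.nonempty
    obtain ⟨x⟩ := this
    refine ⟨⟨x, trivial⟩, ?_⟩
    have := (SimpleGraph.induceUnivIso G).connected_iff.2 h1
    exact (conn_of_connected this).2
  have hdel : ∀ v, Conn G {v}ᶜ := fun v => conn_of_connected (h2 v)
  refine ⟨huniv, hdel, ?_, fun T hT hTd hTc => ?_⟩
  · rw [hsum _ subset_rfl] at h3
    have he : edgesIn G Set.univ = G.edgeSet := by
      ext e; simp [edgesIn]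
    have hc : 1 ≤ Nat.card V := by
      have := h1.nonempty
      exact Nat.card_pos
    unfold excess
    rw [he, Set.ncard_univ]
    zify [hδ, hc] at h3
    linarith
  · have h5 := h4 T (isGoodFlat_of_conn huniv hdel hT hTd hTc)
    rw [hsum _ fun e he => he.1] at h5
    have hc : 1 ≤ T.ncard := (Set.ncard_pos).2 hT.1
    unfold excess
    zify [hδ, hc] at h5
    linarith

end Contract

/-! ### Ears -/

section Path

variable {V : Type*} {G : SimpleGraph V} {m : ℕ} {p : Fin (m + 1) → V}

theorem IsEar.conn_range (h : IsEar G p) : Conn G (Set.range p) := by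
  refine ⟨⟨p 0, 0, rfl⟩, fun X hX ⟨x, hx⟩ ⟨y, hy, hyX⟩ => ?_⟩
  by_contra! hcon
  have key : ∀ i, p i ∈ X ↔ p 0 ∈ X := by
    intro i
    induction i using Fin.induction with
    | zero => rfl
    | succ i ih =>
      rw [← ih]
      constructor
      · intro h1
        by_contra h2
        exact hcon _ h1 _ ⟨⟨_, rfl⟩, h2⟩ (h.2.1 i).symm
      · intro h1
        by_contra h2
        exact hcon _ h1 _ ⟨⟨_, rfl⟩, h2⟩ (h.2.1 i)
  obtain ⟨i, rfl⟩ := hX hx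
  obtain ⟨j, rfl⟩ := hy
  exact hyX ((key j).2 ((key i).1 hx))

theorem earEdges_mem : ∀ e ∈ earEdges p, ∀ v ∈ e, v ∈ Set.range p := by
  rintro e ⟨i, rfl⟩ v hv
  rcases Sym2.mem_iff.1 hv with rfl | rfl
  exacts [⟨_, rfl⟩, ⟨_, rfl⟩]

theorem IsEar.earEdges_subset (h : IsEar G p) : earEdges p ⊆ edgesIn G (Set.range p) := by
  intro e he
  refine ⟨?_, earEdges_mem e he⟩
  obtain ⟨i, rfl⟩ := he
  exact h.2.1 i

theorem IsEar.ncard_earEdges (h : IsEar G p) : (earEdges p).ncard = m := by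
  have h1 : earEdges p = Set.range fun i : Fin m => s(p i.castSucc, p i.succ) := by
    ext e; exact ⟨fun ⟨i, hi⟩ => ⟨i, hi.symm⟩, fun ⟨i, hi⟩ => ⟨i, hi.symm⟩⟩
  rw [h1, ← Nat.card_coe_set_eq, Nat.card_range_of_injective, Nat.card_fin]
  intro i j hij
  rcases Sym2.eq_iff.1 hij with ⟨h2, -⟩ | ⟨h2, h3⟩
  · exact Fin.castSucc_injective _ (h.1 h2)
  · have h4 := congrArg Fin.val (h.1 h2)
    have h5 := congrArg Fin.val (h.1 h3)
    simp only [Fin.val_castSucc, Fin.val_succ] at h4 h5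
    omega

theorem IsEar.nbr [Finite V] (h : IsEar G p) {i : Fin (m + 1)} (h0 : i ≠ 0)
    (hl : i ≠ Fin.last m) {y : V} (hy : G.Adj (p i) y) : y ∈ Set.range p := by
  have hd := h.2.2 i h0 hl
  obtain ⟨j, hj⟩ := Fin.exists_succ_eq.2 h0
  obtain ⟨k, hk⟩ := Fin.exists_castSucc_eq.2 hl
  have hj' := h.2.1 j
  have hk' := h.2.1 k
  rw [hj] at hj'
  rw [hk] at hk'
  have hne : p j.castSucc ≠ p k.succ := by
    intro h'
    have h1 := congrArg Fin.val (h.1 h')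
    have h2 := congrArg Fin.val hj
    have h3 := congrArg Fin.val hk
    simp only [Fin.val_castSucc, Fin.val_succ] at h1 h2 h3
    omega
  have hsub : {p j.castSucc, p k.succ} ⊆ G.neighborSet (p i) := by
    rintro z (rfl | rfl)
    exacts [hj'.symm, hk']
  have heq := Set.eq_of_subset_of_ncard_le hsub (by rw [hd, Set.ncard_pair hne])
  have : y ∈ G.neighborSet (p i) := hy
  rw [← heq] at this
  rcases this with rfl | rfl
  exacts [⟨_, rfl⟩, ⟨_, rfl⟩]

/-- An ear with `δ - 1` edges whose contraction is `2`-connected has a connected complement; as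
its vertex set has positive excess, it carries no further edges. -/
theorem IsEar.earSet [Finite V] {δ : ℕ} (hδ : 2 < δ) (hm : m = δ - 1) (hG : Tight G δ)
    (h : IsEar G p) (hc : IsTwoConnected (contractEdges G (earEdges p))) :
    EarSet G δ (Set.range p) (p 0) (p (Fin.last m)) := by
  have hne : p 0 ≠ p (Fin.last m) := fun h' => by
    have := congrArg Fin.val (h.1 h')
    simp at this
    omega
  have hcompl : Conn G (Set.range p)ᶜ := by
    refine conn_of_contract (S := Set.range p) earEdges_mem
      (k := (SimpleGraph.fromEdgeSet (earEdges p)).connectedComponentMk (p 0)) ?_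
      ⟨p 0, 0, rfl⟩ (conn_of_connected (hc.2 _))
    rintro _ ⟨i, rfl⟩
    induction i using Fin.induction with
    | zero => rfl
    | succ i ih => rw [← ih]; exact (mk_eq_of_mem (F := earEdges p) ⟨i, rfl⟩).symm
  have hcard : (Set.range p).ncard = m + 1 := by
    rw [← Nat.card_coe_set_eq, Nat.card_range_of_injective h.1, Nat.card_fin]
  have hpos := hG.one_le h.conn_range ⟨p 0, ⟨0, rfl⟩, p (Fin.last m), ⟨_, rfl⟩, hne⟩
    (fun h' => by
      obtain ⟨q, hq⟩ := hcompl.1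
      exact hq (h' ▸ trivial))
  have hle := Set.ncard_le_ncard h.earEdges_subset
  rw [h.ncard_earEdges] at hle
  have hδm : (δ : ℤ) = m + 1 := by omega
  have hE : (edgesIn G (Set.range p)).ncard = m := by
    unfold excess at hpos
    rw [hcard, hδm] at hpos
    push_cast at hpos
    refine le_antisymm ?_ hle
    by_contra! hlt
    have : (m : ℤ) + 1 ≤ (edgesIn G (Set.range p)).ncard := by exact_mod_cast hlt
    nlinarith
  have hEq : earEdges p = edgesIn G (Set.range p) :=
    Set.eq_of_subset_of_ncard_le h.earEdges_subset (by rw [hE, h.ncard_earEdges])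
  refine ⟨⟨0, rfl⟩, ⟨_, rfl⟩, hne, ?_, h.conn_range, hcompl, ?_, ?_, ?_⟩
  · refine ⟨p ⟨1, by omega⟩, ⟨_, rfl⟩, fun h' => ?_, fun h' => ?_⟩
    · have := congrArg Fin.val (h.1 h')
      simp at this
    · have := congrArg Fin.val (h.1 h')
      simp at this
      omega
  · rintro _ ⟨i, rfl⟩ h0 hl y hy
    exact h.nbr (fun h' => h0 (h' ▸ rfl)) (fun h' => hl (h' ▸ rfl)) hy
  · unfold excess
    rw [hcard, hE, hδm]
    push_cast
    ring
  · have hnadj : ¬ G.Adj (p 0) (p (Fin.last m)) := by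
      intro hadj
      have : s(p 0, p (Fin.last m)) ∈ earEdges p := by
        rw [hEq]
        refine ⟨hadj, fun v hv => ?_⟩
        rcases Sym2.mem_iff.1 hv with rfl | rfl
        exacts [⟨_, rfl⟩, ⟨_, rfl⟩]
      obtain ⟨i, hi⟩ := this
      rcases Sym2.eq_iff.1 hi with ⟨h2, h3⟩ | ⟨h2, h3⟩
      all_goals
        have h4 := congrArg Fin.val (h.1 h2)
        have h5 := congrArg Fin.val (h.1 h3)
        simp only [Fin.val_zero, Fin.val_last, Fin.val_castSucc, Fin.val_succ] at h4 h5
        omega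
    have hemp : edgesIn G {p 0, p (Fin.last m)} = ∅ := by
      ext e
      induction e with | h x y =>
      simp only [edgesIn, Set.mem_ofPred_eq, SimpleGraph.mem_edgeSet, Sym2.mem_iff,
        Set.mem_insert_iff, Set.mem_singleton_iff, Set.mem_empty_iff_false, iff_false, not_and]
      intro hxy hh
      rcases hh x (Or.inl rfl) with rfl | rfl <;> rcases hh y (Or.inr rfl) with rfl | rfl
      exacts [hxy.ne rfl, hnadj hxy, hnadj hxy.symm, hxy.ne rfl]
    unfold excess
    rw [hemp, Set.ncard_pair hne]
    simp

end Path

theorem stmt13 {δ m : ℕ} (hδ : 2 < δ) (hm : m = δ - 1)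
    {V : Type*} [Fintype V] [DecidableEq V]
    (G : SimpleGraph V) (w : Sym2 V → ℕ) (hsp : SatisfiesSpade G δ w)
    (hall : ∀ e ∈ G.edgeSet, w e = δ - 1)
    (hnotcycle : ¬ Nonempty (G ≃g SimpleGraph.cycleGraph δ))
    (p : Fin (m + 1) → V) (hear : IsEar G p) :
    ¬ IsTwoConnected (contractEdges G (earEdges p)) := by
  intro hc
  have hG : Tight G δ := hsp.tight (by omega) hall
  exact (hear.earSet hδ hm hG hc).contradiction hG hδ

end Gor
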